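/- arXiv:1707.02916 — 4 statements merged into one kernel-verified Lean document; each statement's English description precedes it below -/
import Mathlib

section
/- Let G, H, and J be finite simple graphs. Suppose that H is J-decomposable with J-decomposition (F, T), and that Hom(J, G) is non-empty. Then t_H(G) ≥ t_J(G)^{|F|} / Π_{XY ∈ E(T)} t_{H[X∩Y]}(G), where H[X∩Y] denotes the subgraph of H induced on X ∩ Y. -/
open MeasureTheory

/-- The homomorphism density `t_H(G)`. -/
noncomputable def homDensity {α β : Type*} [Fintype α] [Fintype β]
    (H : SimpleGraph α) (G : SimpleGraph β) : ℝ :=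
  (Nat.card (H →g G) : ℝ) / (Fintype.card β : ℝ) ^ (Fintype.card α)

/-- The number of edges of a graph. -/
noncomputable def edgeCount {α : Type*} (H : SimpleGraph α) : ℕ :=
  Nat.card H.edgeSet

/-- `G` is `(ρ,d)`-dense: every vertex subset `X` with `|X| ≥ ρ|V(G)|`
spans at least `(d/2)|X|²` edges. -/
def LocallyDense {β : Type*} [Fintype β] (G : SimpleGraph β) (ρ d : ℝ) : Prop :=
  ∀ X : Finset β, ρ * (Fintype.card β : ℝ) ≤ (X.card : ℝ) →
    d / 2 * (X.card : ℝ) ^ 2 ≤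
      (Nat.card {e : Sym2 β // e ∈ G.edgeSet ∧ ∀ v ∈ e, v ∈ X} : ℝ)

/-- `(bag, T)` is a tree decomposition of `H`. -/
def IsTreeDecomp {α ι : Type*} [DecidableEq α] (H : SimpleGraph α) (bag : ι → Finset α)
    (T : SimpleGraph ι) : Prop :=
  T.IsTree ∧
  (∀ v : α, ∃ X, v ∈ bag X) ∧
  (∀ u v : α, H.Adj u v → ∃ X, u ∈ bag X ∧ v ∈ bag X) ∧
  (∀ X Y Z : ι, ∀ p : T.Walk X Y, p.IsPath → Z ∈ p.support →
    bag X ∩ bag Y ⊆ bag Z)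

/-- `(bag, T)` is a `J`-decomposition of `H`: a tree decomposition in which every
bag induces a copy of `J`, and for adjacent bags there is an isomorphism between the
induced copies of `J` fixing the intersection pointwise. -/
def IsJDecomp {α ι γ : Type*} [DecidableEq α] (H : SimpleGraph α) (J : SimpleGraph γ)
    (bag : ι → Finset α) (T : SimpleGraph ι) : Prop :=
  IsTreeDecomp H bag T ∧
  (∀ X : ι, Nonempty (H.induce ↑(bag X) ≃g J)) ∧
  (∀ X Y : ι, T.Adj X Y → ∃ e : H.induce ↑(bag X) ≃g H.induce ↑(bag Y),
      ∀ (v : α) (h1 : v ∈ bag X) (h2 : v ∈ bag Y),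
        ((e ⟨v, h1⟩ : ↑(bag Y)) : α) = v)

/-- `H` is `J`-decomposable. -/
def JDecomposable {α γ : Type*} [DecidableEq α] (H : SimpleGraph α) (J : SimpleGraph γ) : Prop :=
  ∃ (ι : Type) (_ : Fintype ι) (bag : ι → Finset α) (T : SimpleGraph ι),
    IsJDecomp H J bag T

/-!
For a bag `X`, let `1_X` be the indicator of those maps `V(H) → V(G)` that are homomorphisms on `X`.
For an edge `e = XY` of the tree, let `d_e` be the conditional mean of `1_X` given the values on
`X ∩ Y`; the isomorphism fixing `X ∩ Y` shows that `1_Y` has the same conditional mean. Gluing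
along the tree gives a weight `w = ∏ 1_X / ∏ d_e` whose conditional mean given the values on `X` is
again `1_X`, for every bag `X`. In particular `𝔼 w = τ := t_J(G)`, and `𝔼 (w / d_e)` is the
probability that `d_e ≠ 0`, hence at most `t_{H[X ∩ Y]}(G)`. With respect to the probability weights
proportional to `w`, the arithmetic mean of `∏ d_e` is at least its geometric mean, which is the
product over `e` of the geometric means of the `d_e`; the latter are at least the harmonic means
`τ / 𝔼 (w / d_e)`. Thus `t_H(G) = 𝔼 (w ∏ d_e) ≥ τ ∏ (τ / t_{H[X ∩ Y]}(G))`, and the tree has one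
edge fewer than it has vertices.
-/

section HarmonicMean

open Finset BigOperators

variable {Ω κ : Type*}

lemma prod_inv_le_sum_mul_prod {s : Finset Ω} {E : Finset κ} {p : Ω → ℝ} {d : κ → Ω → ℝ}
    {c : κ → ℝ} (hp : ∀ x ∈ s, 0 ≤ p x) (hp1 : ∑ x ∈ s, p x = 1)
    (hd : ∀ e ∈ E, ∀ x ∈ s, 0 ≤ d e x) (hpd : ∀ e ∈ E, ∀ x ∈ s, p x ≠ 0 → d e x ≠ 0)
    (hc : ∀ e ∈ E, ∑ x ∈ s, p x / d e x ≤ c e) :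
    ∏ e ∈ E, (c e)⁻¹ ≤ ∑ x ∈ s, p x * ∏ e ∈ E, d e x := by
  have harmonic_le_geometric : ∀ e ∈ E, 0 ≤ (c e)⁻¹ ∧ (c e)⁻¹ ≤ ∏ x ∈ s, d e x ^ p x := by
    intro e he
    have hpos : 0 < ∏ x ∈ s, d e x ^ p x := prod_pos fun x hx ↦ by
      obtain h | h := eq_or_ne (p x) 0
      · simp [h]
      · exact Real.rpow_pos_of_pos ((hd e he x hx).lt_of_ne' (hpd e he x hx h)) _
    have hle : (∏ x ∈ s, d e x ^ p x)⁻¹ ≤ c e := calc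
      (∏ x ∈ s, d e x ^ p x)⁻¹ = ∏ x ∈ s, (d e x)⁻¹ ^ p x := by
        rw [← prod_inv_distrib]
        exact prod_congr rfl fun x hx ↦ (Real.inv_rpow (hd e he x hx) _).symm
      _ ≤ ∑ x ∈ s, p x * (d e x)⁻¹ :=
        Real.geom_mean_le_arith_mean_weighted s p _ hp hp1 fun x hx ↦ inv_nonneg.2 (hd e he x hx)
      _ ≤ c e := by simpa only [div_eq_mul_inv] using hc e he
    exact ⟨inv_nonneg.2 ((inv_pos.2 hpos).le.trans hle), inv_le_of_inv_le₀ hpos hle⟩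
  calc ∏ e ∈ E, (c e)⁻¹ ≤ ∏ e ∈ E, ∏ x ∈ s, d e x ^ p x :=
        prod_le_prod (fun e he ↦ (harmonic_le_geometric e he).1)
          fun e he ↦ (harmonic_le_geometric e he).2
    _ = ∏ x ∈ s, (∏ e ∈ E, d e x) ^ p x := by
        rw [prod_comm]
        exact prod_congr rfl fun x hx ↦ Real.finsetProd_rpow E _ (fun e he ↦ hd e he x hx) _
    _ ≤ ∑ x ∈ s, p x * ∏ e ∈ E, d e x :=
        Real.geom_mean_le_arith_mean_weighted s p _ hp hp1
          fun x hx ↦ prod_nonneg fun e he ↦ hd e he x hx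

lemma expect_pow_succ_card_div_prod_le [Fintype Ω] {E : Finset κ} {w : Ω → ℝ} {d : κ → Ω → ℝ}
    {c : κ → ℝ} (hw : 0 ≤ w) (hd : ∀ e ∈ E, 0 ≤ d e) (hwd : ∀ e ∈ E, ∀ x, w x ≠ 0 → d e x ≠ 0)
    (hc : ∀ e ∈ E, 𝔼 x, w x / d e x ≤ c e) :
    (𝔼 x, w x) ^ (#E + 1) / ∏ e ∈ E, c e ≤ 𝔼 x, w x * ∏ e ∈ E, d e x := by
  set τ := 𝔼 x, w x with hτ
  obtain h0 | hpos : 0 = τ ∨ 0 < τ := (expect_nonneg fun x _ ↦ hw x).eq_or_lt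
  · rw [← h0, zero_pow (#E).succ_ne_zero, zero_div]
    exact expect_nonneg fun x _ ↦ mul_nonneg (hw x) (prod_nonneg fun e he ↦ hd e he x)
  set p : Ω → ℝ := fun x ↦ w x / Fintype.card Ω / τ with hp
  have sum_p_mul (y : Ω → ℝ) : ∑ x, p x * y x = (𝔼 x, w x * y x) / τ := by
    rw [Fintype.expect_eq_sum_div_card, sum_div, sum_div]
    exact sum_congr rfl fun x _ ↦ by simp only [hp]; ring
  have hp1 : ∑ x, p x = 1 := by
    simpa only [mul_one, ← hτ, div_self hpos.ne'] using sum_p_mul fun _ ↦ 1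
  have key : ∏ e ∈ E, (c e / τ)⁻¹ ≤ ∑ x, p x * ∏ e ∈ E, d e x := by
    refine prod_inv_le_sum_mul_prod (fun x _ ↦ ?_) hp1 (fun e he x _ ↦ hd e he x)
      (fun e he x _ hx ↦ hwd e he x fun h ↦ hx (by simp [hp, h])) fun e he ↦ ?_
    · exact div_nonneg (div_nonneg (hw x) (Nat.cast_nonneg _)) hpos.le
    · calc ∑ x, p x / d e x = (𝔼 x, w x / d e x) / τ := by
            simpa only [div_eq_mul_inv, Pi.inv_apply] using sum_p_mul (d e)⁻¹
        _ ≤ c e / τ := div_le_div_of_nonneg_right (hc e he) hpos.le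
  rw [sum_p_mul, le_div_iff₀ hpos] at key
  simpa only [inv_div, prod_div_distrib, prod_const, div_mul_eq_mul_div, ← pow_succ] using key

end HarmonicMean

section CondAvg

open Finset BigOperators

variable {α : Type*} {π : α → Type*} [Fintype α] [DecidableEq α] [∀ a, Fintype (π a)]
  {A B L U : Finset α} {f g : (∀ a, π a) → ℝ}

/-- The conditional expectation of `f` given the coordinates in `A`, for the uniform measure on a
finite product: the coordinates outside `A` are averaged out. -/
noncomputable def condAvg (A : Finset α) (f : (∀ a, π a) → ℝ) (x : ∀ a, π a) : ℝ :=
  𝔼 y, f (A.piecewise x y)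

lemma dependsOn_condAvg (A : Finset α) (f : (∀ a, π a) → ℝ) :
    DependsOn (condAvg A f) (A : Set α) := fun _ _ h ↦
  expect_congr rfl fun _ _ ↦ congrArg f (A.piecewise_congr h fun _ _ ↦ rfl)

lemma condAvg_nonneg (A : Finset α) (hf : 0 ≤ f) : 0 ≤ condAvg A f :=
  fun _ ↦ expect_nonneg fun _ _ ↦ hf _

lemma eq_zero_of_condAvg_eq_zero (hf : 0 ≤ f) {x : ∀ a, π a} (h : condAvg A f x = 0) :
    f x = 0 := by
  have hzero := (expect_eq_zero_iff_of_nonneg (fun y _ ↦ hf (A.piecewise x y))).1 h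
  simpa only [piecewise_same] using hzero x (mem_univ x)

lemma condAvg_mul_of_dependsOn (hg : DependsOn g (A : Set α)) :
    condAvg A (g * f) = g * condAvg A f := by
  ext x
  have hgx (y : ∀ a, π a) : g (A.piecewise x y) = g x :=
    hg fun a ha ↦ A.piecewise_eq_of_mem x y ha
  simp only [condAvg, Pi.mul_apply, hgx, mul_expect]

lemma condAvg_eq_self (hf : DependsOn f (A : Set α)) : condAvg A f = f := by
  ext x
  have hfx (y : ∀ a, π a) : f (A.piecewise x y) = f x :=
    hf fun a ha ↦ A.piecewise_eq_of_mem x y ha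
  have : Nonempty (∀ a, π a) := ⟨x⟩
  simp only [condAvg, hfx, Fintype.expect_const]

lemma condAvg_eq_condAvg_inter (hf : DependsOn f (U : Set α)) (B : Finset α) :
    condAvg B f = condAvg (B ∩ U) f := by
  ext x
  refine expect_congr rfl fun y _ ↦ hf fun a ha ↦ ?_
  simp only [Finset.piecewise, mem_inter, mem_coe.1 ha, and_true]

lemma expect_condAvg (B : Finset α) (f : (∀ a, π a) → ℝ) : 𝔼 x, condAvg B f x = 𝔼 x, f x := by
  let swapOff : (∀ a, π a) × (∀ a, π a) → (∀ a, π a) × (∀ a, π a) :=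
    fun p ↦ (B.piecewise p.1 p.2, B.piecewise p.2 p.1)
  have hswap : Function.Involutive swapOff := fun p ↦ by
    ext a <;> by_cases ha : a ∈ B <;> simp [swapOff, ha]
  calc 𝔼 x, 𝔼 y, f (B.piecewise x y)
      = 𝔼 p : (∀ a, π a) × (∀ a, π a), f (swapOff p).1 :=
        (expect_product univ univ fun p ↦ f (swapOff p).1).symm
    _ = 𝔼 p : (∀ a, π a) × (∀ a, π a), f p.1 :=
        Fintype.expect_equiv hswap.toPerm _ _ fun _ ↦ rfl
    _ = 𝔼 x, 𝔼 _y : ∀ a, π a, f x := expect_product univ univ fun p ↦ f p.1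
    _ = 𝔼 x, f x := expect_congr rfl fun x _ ↦ expect_const ⟨x, mem_univ x⟩ (f x)

lemma expect_div_of_dependsOn (hg : DependsOn g (A : Set α)) :
    𝔼 x, f x / g x = 𝔼 x, condAvg A f x / g x := by
  have hg' : DependsOn g⁻¹ (A : Set α) := fun x y hxy ↦ congrArg (·⁻¹) (hg hxy)
  have hpull : condAvg A (g⁻¹ * f) = g⁻¹ * condAvg A f := condAvg_mul_of_dependsOn hg'
  calc 𝔼 x, f x / g x = 𝔼 x, (g⁻¹ * f) x := by
        simp only [div_eq_inv_mul, Pi.mul_apply, Pi.inv_apply]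
    _ = 𝔼 x, condAvg A f x / g x := by
        rw [← expect_condAvg A, hpull]
        simp only [div_eq_inv_mul, Pi.mul_apply, Pi.inv_apply]

lemma condAvg_condAvg_of_subset (hAB : A ⊆ B) : condAvg A (condAvg B f) = condAvg A f := by
  ext x
  have hpiecewise (y z : ∀ a, π a) :
      B.piecewise (A.piecewise x y) z = A.piecewise x (B.piecewise y z) := by
    ext a
    by_cases ha : a ∈ A
    · simp [ha, hAB ha]
    · simp [Finset.piecewise, ha]
  simp only [condAvg, hpiecewise]
  exact expect_condAvg B fun y ↦ f (A.piecewise x y)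

/-- `f * g / condAvg (U ∩ L) f` is the coupling of the densities `f` and `g` under which they are
conditionally independent given the coordinates in `U ∩ L`. -/
lemma condAvg_mul_div_condAvg (hf : DependsOn f (U : Set α)) (hg : DependsOn g (L : Set α))
    (hf0 : 0 ≤ f) (h : condAvg (U ∩ L) f = condAvg (U ∩ L) g) :
    condAvg U (f * g / condAvg (U ∩ L) f) = f := by
  set D := condAvg (U ∩ L) f
  have hDU : DependsOn D (U : Set α) :=
    (dependsOn_condAvg _ _).mono (coe_subset.2 inter_subset_left)
  have hfD : DependsOn (f / D) (U : Set α) := fun x y hxy ↦ by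
    simp only [Pi.div_apply, hf hxy, hDU hxy]
  calc condAvg U (f * g / D) = f / D * condAvg U g := by
        rw [mul_div_right_comm, condAvg_mul_of_dependsOn hfD]
    _ = f / D * D := by rw [condAvg_eq_condAvg_inter hg, h]
    _ = f := funext fun x ↦ div_mul_cancel_of_imp (eq_zero_of_condAvg_eq_zero hf0)

lemma condAvg_comp_perm {β : Type*} [Fintype β] (f : (α → β) → ℝ) {σ : Equiv.Perm α}
    (hσ : ∀ a ∈ A, σ a = a) : condAvg A (fun φ ↦ f (φ ∘ σ)) = condAvg A f := by
  ext φ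
  refine Fintype.expect_equiv (σ.symm.arrowCongr (Equiv.refl β)) _ _ fun ψ ↦ congrArg f ?_
  ext a
  have hmem : σ a ∈ A ↔ a ∈ A :=
    ⟨fun h ↦ by rwa [σ.injective (hσ _ h)] at h, fun h ↦ by rwa [hσ a h]⟩
  by_cases ha : a ∈ A
  · simp [ha, hσ a ha]
  · simp [ha, hmem]

lemma expect_comp_restrict [Nonempty (∀ a, π a)] (A : Finset α)
    (F : (∀ a : (A : Set α), π a) → ℝ) : 𝔼 x : ∀ a, π a, F (fun a ↦ x a) = 𝔼 y, F y := by
  have : Nonempty (∀ a : {a // a ∉ (A : Set α)}, π a) :=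
    Nonempty.map (fun x a ↦ x a) ‹Nonempty (∀ a, π a)›
  let split := Equiv.piEquivPiSubtypeProd (· ∈ (A : Set α)) π
  calc 𝔼 x : ∀ a, π a, F (fun a ↦ x a) = 𝔼 p, F (p : (∀ a : (A : Set α), π a) × _).1 :=
        Fintype.expect_equiv split _ _ fun _ ↦ rfl
    _ = 𝔼 y, 𝔼 _z, F y := expect_product univ univ fun p ↦ F p.1
    _ = 𝔼 y, F y := expect_congr rfl fun y _ ↦ Fintype.expect_const (F y)

end CondAvg

section InducedConnected

variable {ι : Type*} {T : SimpleGraph ι} {S : Finset ι} {L M Y : ι}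

lemma exists_isPath_mem_support (hS : (T.induce (S : Set ι)).Connected) (hM : M ∈ S) (hL : L ∉ S)
    (hLM : T.Adj L M) (hY : Y ∈ S) : ∃ p : T.Walk L Y, p.IsPath ∧ M ∈ p.support := by
  obtain ⟨q, hq⟩ := (hS ⟨M, hM⟩ ⟨Y, hY⟩).exists_isPath
  let q' : T.Walk M Y := q.map (SimpleGraph.Embedding.induce (S : Set ι)).toHom
  have hLq' : L ∉ q'.support := fun h ↦ by
    obtain ⟨v, -, rfl⟩ := List.mem_map.1 (q.support_map _ ▸ h)
    exact hL v.2
  exact ⟨.cons hLM q', (hq.map Subtype.val_injective).cons hLq', by simp⟩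

lemma eq_of_adj_of_connected_induce (hT : T.IsAcyclic) (hS : (T.induce (S : Set ι)).Connected)
    (hM : M ∈ S) (hL : L ∉ S) (hLM : T.Adj L M) (hY : Y ∈ S) (hLY : T.Adj L Y) : Y = M := by
  obtain ⟨p, hp, hMp⟩ := exists_isPath_mem_support hS hM hL hLM hY
  have hpY : p = hLY.toWalk :=
    congrArg Subtype.val ((hT.subsingleton_path L Y).elim ⟨p, hp⟩ (SimpleGraph.Path.singleton hLY))
  simpa [hpY, hLM.ne', eq_comm] using hMp

variable [DecidableEq ι]

lemma finset_induction_of_connected [Fintype ι] (hT : T.Connected) {P : Finset ι → Prop}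
    (hsingleton : ∀ r, P {r})
    (hinsert : ∀ (S : Finset ι) (L M : ι), (T.induce (S : Set ι)).Connected → M ∈ S → L ∉ S →
      T.Adj L M → P S → P (insert L S)) : P Finset.univ := by
  obtain ⟨r⟩ := hT.nonempty
  obtain ⟨S, ⟨hS, hPS⟩, hmax⟩ := (Set.toFinite
    {S : Finset ι | (T.induce (S : Set ι)).Connected ∧ P S}).exists_maximal
      ⟨{r}, by rw [Finset.coe_singleton]; exact .of_subsingleton, hsingleton r⟩
  suffices S = Finset.univ from this ▸ hPS
  by_contra hne
  obtain ⟨⟨M, hM⟩⟩ := hS.nonempty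
  obtain ⟨Y, hY⟩ : ∃ Y, Y ∉ S := by simpa [Finset.eq_univ_iff_forall] using hne
  obtain ⟨p⟩ := hT.preconnected M Y
  obtain ⟨e, -, hfst, hsnd⟩ := p.exists_boundary_dart (S : Set ι) hM hY
  have hconn : (T.induce (↑(insert e.snd S) : Set ι)).Connected := by
    rw [Finset.coe_insert, Set.insert_eq]
    exact SimpleGraph.connected_induce_union .of_subsingleton hS.preconnected rfl hfst e.adj.symm
  exact hsnd (hmax ⟨hconn, hinsert S _ _ hS hfst hsnd e.adj.symm hPS⟩
    (Finset.subset_insert _ _) (Finset.mem_insert_self _ _))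

lemma edgeFinset_filter_mem_sym2_insert [Fintype T.edgeSet] (hT : T.IsAcyclic)
    (hS : (T.induce (S : Set ι)).Connected) (hM : M ∈ S) (hL : L ∉ S) (hLM : T.Adj L M) :
    T.edgeFinset.filter (· ∈ (insert L S).sym2) =
      insert s(L, M) (T.edgeFinset.filter (· ∈ S.sym2)) := by
  have hunique {Y : ι} (hY : Y ∈ S) (hLY : T.Adj L Y) : Y = M :=
    eq_of_adj_of_connected_induce hT hS hM hL hLM hY hLY
  ext e
  induction e with | _ X Y =>
  simp only [Finset.mem_filter, SimpleGraph.mem_edgeFinset, SimpleGraph.mem_edgeSet,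
    Finset.mk_mem_sym2_iff, Finset.mem_insert, Sym2.eq_iff]
  constructor
  · rintro ⟨hXY, rfl | hX, rfl | hY⟩
    · exact absurd rfl hXY.ne
    · exact .inl (.inl ⟨rfl, hunique hY hXY⟩)
    · exact .inl (.inr ⟨hunique hX hXY.symm, rfl⟩)
    · exact .inr ⟨hXY, hX, hY⟩
  · rintro ((⟨rfl, rfl⟩ | ⟨rfl, rfl⟩) | ⟨hXY, hX, hY⟩)
    · exact ⟨hLM, .inl rfl, .inr hM⟩
    · exact ⟨hLM.symm, .inr hM, .inl rfl⟩
    · exact ⟨hXY, .inr hX, .inr hY⟩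

end InducedConnected

section JunctionTree

open Finset BigOperators

variable {ι α : Type*} [DecidableEq α] {T : SimpleGraph ι} {bag : ι → Finset α}

/-- A tree on the index set of a family of finite sets with the running intersection property: the
part of a tree decomposition that does not mention the decomposed graph. -/
structure IsJunctionTree (T : SimpleGraph ι) (bag : ι → Finset α) : Prop where
  isTree : T.IsTree
  inter_subset : ∀ {X Y Z : ι} {p : T.Walk X Y}, p.IsPath → Z ∈ p.support → bag X ∩ bag Y ⊆ bag Z

lemma IsTreeDecomp.isJunctionTree {H : SimpleGraph α} (h : IsTreeDecomp H bag T) :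
    IsJunctionTree T bag :=
  ⟨h.1, h.2.2.2 _ _ _ _⟩

lemma IsJunctionTree.biUnion_inter_eq (hT : IsJunctionTree T bag) {S : Finset ι} {L M : ι}
    (hS : (T.induce (S : Set ι)).Connected) (hM : M ∈ S) (hL : L ∉ S) (hLM : T.Adj L M) :
    S.biUnion bag ∩ bag L = bag M ∩ bag L := by
  refine (inter_subset_inter_right (subset_biUnion_of_mem bag hM)).antisymm' fun a ha ↦ ?_
  obtain ⟨haS, haL⟩ := mem_inter.1 ha
  obtain ⟨Y, hY, haY⟩ := mem_biUnion.1 haS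
  obtain ⟨p, hp, hMp⟩ := exists_isPath_mem_support hS hM hL hLM hY
  exact mem_inter.2 ⟨hT.inter_subset hp hMp (mem_inter.2 ⟨haL, haY⟩), haL⟩

variable {π : α → Type*} [Fintype α] [∀ a, Fintype (π a)] {f : ι → (∀ a, π a) → ℝ} {X Y : ι}

/-- Nonnegative functions `f X` of the coordinates in `bag X` such that adjacent bags induce the
same marginal on their intersection. -/
structure IsConsistentFamily (T : SimpleGraph ι) (bag : ι → Finset α)
    (f : ι → (∀ a, π a) → ℝ) : Prop where
  nonneg : ∀ X, 0 ≤ f X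
  dependsOn : ∀ X, DependsOn (f X) (bag X : Set α)
  condAvg_eq : ∀ {X Y}, T.Adj X Y → condAvg (bag X ∩ bag Y) (f X) = condAvg (bag X ∩ bag Y) (f Y)

/-- The common marginal of a consistent family on the intersection of the two bags of an edge,
computed from an arbitrarily chosen end of that edge. -/
noncomputable def separatorMarginal (bag : ι → Finset α) (f : ι → (∀ a, π a) → ℝ) (e : Sym2 ι) :
    (∀ a, π a) → ℝ :=
  condAvg (bag e.out.1 ∩ bag e.out.2) (f e.out.1)

lemma IsConsistentFamily.separatorMarginal_mk (hf : IsConsistentFamily T bag f)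
    (hXY : T.Adj X Y) : separatorMarginal bag f s(X, Y) = condAvg (bag X ∩ bag Y) (f X) := by
  have hout : s(s(X, Y).out.1, s(X, Y).out.2) = s(X, Y) := Quot.out_eq _
  rw [separatorMarginal]
  obtain ⟨hX, hY⟩ | ⟨hY, hX⟩ := Sym2.eq_iff.1 hout
  · rw [hX, hY]
  · rw [hX, hY, inter_comm, hf.condAvg_eq hXY]

lemma IsConsistentFamily.separatorMarginal_nonneg (hf : IsConsistentFamily T bag f) (e : Sym2 ι) :
    0 ≤ separatorMarginal bag f e :=
  condAvg_nonneg _ (hf.nonneg _)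

lemma dependsOn_separatorMarginal (bag : ι → Finset α) (f : ι → (∀ a, π a) → ℝ) (e : Sym2 ι) :
    DependsOn (separatorMarginal bag f e) (bag e.out.1 : Set α) :=
  (dependsOn_condAvg _ _).mono (coe_subset.2 inter_subset_left)

lemma IsConsistentFamily.prod_eq_zero_of_separatorMarginal_eq_zero [Fintype ι]
    (hf : IsConsistentFamily T bag f) {e : Sym2 ι} {x : ∀ a, π a}
    (hx : separatorMarginal bag f e x = 0) : ∏ X, f X x = 0 :=
  prod_eq_zero (mem_univ e.out.1) (eq_zero_of_condAvg_eq_zero (hf.nonneg _) hx)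

variable [Fintype T.edgeSet]

section JunctionWeight

variable [DecidableEq ι] {S : Finset ι} {L M : ι}

/-- The junction-tree density `∏ f X / ∏ separatorMarginal e` over the bags `X ∈ S` and the edges
`e` of `T` inside `S`: for `S` connected, the joint density with marginals `f X` in which distinct
branches of the tree are conditionally independent. Where a denominator vanishes so does the
numerator, and the value is `0`. -/
noncomputable def junctionWeight (T : SimpleGraph ι) [Fintype T.edgeSet] (bag : ι → Finset α)
    (f : ι → (∀ a, π a) → ℝ) (S : Finset ι) : (∀ a, π a) → ℝ :=
  (∏ X ∈ S, f X) / ∏ e ∈ T.edgeFinset with e ∈ S.sym2, separatorMarginal bag f e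

lemma IsConsistentFamily.junctionWeight_nonneg (hf : IsConsistentFamily T bag f) (S : Finset ι) :
    0 ≤ junctionWeight T bag f S := fun x ↦ by
  simp only [junctionWeight, Pi.div_apply, Finset.prod_apply]
  exact div_nonneg (prod_nonneg fun X _ ↦ hf.nonneg X x)
    (prod_nonneg fun e _ ↦ hf.separatorMarginal_nonneg e x)

lemma IsConsistentFamily.dependsOn_junctionWeight (hf : IsConsistentFamily T bag f)
    (S : Finset ι) : DependsOn (junctionWeight T bag f S) (S.biUnion bag : Set α) := by
  intro x y hxy
  have hbag {X : ι} (hX : X ∈ S) : ∀ a ∈ (bag X : Set α), x a = y a :=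
    fun a ha ↦ hxy a (subset_biUnion_of_mem bag hX ha)
  simp only [junctionWeight, Pi.div_apply, Finset.prod_apply]
  congr 1
  · exact prod_congr rfl fun X hX ↦ hf.dependsOn X (hbag hX)
  · refine prod_congr rfl fun e he ↦ dependsOn_separatorMarginal bag f e (hbag ?_)
    exact mem_sym2_iff.1 (mem_filter.1 he).2 _ e.out_fst_mem

lemma junctionWeight_singleton (r : ι) : junctionWeight T bag f {r} = f r := by
  have hloop : T.edgeFinset.filter (· ∈ ({r} : Finset ι).sym2) = ∅ :=
    filter_eq_empty_iff.2 fun e he hr ↦ by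
      rw [sym2_singleton, mem_singleton] at hr
      exact T.not_isDiag_of_mem_edgeFinset he (hr ▸ Sym2.diag_isDiag r)
  rw [junctionWeight, hloop, prod_empty, div_one, prod_singleton]

lemma IsConsistentFamily.junctionWeight_insert (hf : IsConsistentFamily T bag f)
    (hT : T.IsAcyclic) (hS : (T.induce (S : Set ι)).Connected) (hM : M ∈ S) (hL : L ∉ S)
    (hLM : T.Adj L M) :
    junctionWeight T bag f (insert L S) =
      junctionWeight T bag f S * f L / condAvg (bag L ∩ bag M) (f L) := by
  have hnew : s(L, M) ∉ T.edgeFinset.filter (· ∈ S.sym2) := fun h ↦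
    hL (mk_mem_sym2_iff.1 (mem_filter.1 h).2).1
  rw [junctionWeight, junctionWeight, edgeFinset_filter_mem_sym2_insert hT hS hM hL hLM,
    prod_insert hL, prod_insert hnew, hf.separatorMarginal_mk hLM, div_mul_eq_mul_div, div_div,
    mul_comm (f L), mul_comm (condAvg _ _)]

lemma IsConsistentFamily.condAvg_junctionWeight_insert (hf : IsConsistentFamily T bag f)
    (hT : IsJunctionTree T bag) (hS : (T.induce (S : Set ι)).Connected) (hM : M ∈ S)
    (hL : L ∉ S) (hLM : T.Adj L M)
    (ih : ∀ X ∈ S, condAvg (bag X) (junctionWeight T bag f S) = f X) :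
    ∀ X ∈ insert L S, condAvg (bag X) (junctionWeight T bag f (insert L S)) = f X := by
  set w := junctionWeight T bag f S with hw
  have hinter : S.biUnion bag ∩ bag L = bag L ∩ bag M := by
    rw [hT.biUnion_inter_eq hS hM hL hLM, inter_comm]
  have hmarg : condAvg (S.biUnion bag ∩ bag L) w = condAvg (S.biUnion bag ∩ bag L) (f L) := by
    rw [hinter, ← condAvg_condAvg_of_subset inter_subset_right, ih M hM, hf.condAvg_eq hLM]
  have hwdep := hf.dependsOn_junctionWeight S
  rw [hf.junctionWeight_insert hT.isTree.isAcyclic hS hM hL hLM, ← hw, ← hinter]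
  refine forall_mem_insert _ _ _ |>.2 ⟨?_, fun X hX ↦ ?_⟩
  · rw [mul_comm w, inter_comm]
    rw [inter_comm] at hmarg
    exact condAvg_mul_div_condAvg (hf.dependsOn L) hwdep (hf.nonneg L) hmarg.symm
  · rw [← condAvg_condAvg_of_subset (subset_biUnion_of_mem bag hX), ← hmarg,
      condAvg_mul_div_condAvg hwdep (hf.dependsOn L) (hf.junctionWeight_nonneg S) hmarg, ih X hX]

variable [Fintype ι]

theorem IsConsistentFamily.condAvg_junctionWeight_univ (hf : IsConsistentFamily T bag f)
    (hT : IsJunctionTree T bag) (X : ι) :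
    condAvg (bag X) (junctionWeight T bag f univ) = f X := by
  refine finset_induction_of_connected hT.isTree.connected
    (P := fun S ↦ ∀ X ∈ S, condAvg (bag X) (junctionWeight T bag f S) = f X) (fun r X hX ↦ ?_)
    (fun S L M hS hM hL hLM ↦ hf.condAvg_junctionWeight_insert hT hS hM hL hLM) X (mem_univ X)
  obtain rfl := mem_singleton.1 hX
  rw [junctionWeight_singleton, condAvg_eq_self (hf.dependsOn X)]

lemma IsConsistentFamily.junctionWeight_univ_mul (hf : IsConsistentFamily T bag f)
    (x : ∀ a, π a) :
    junctionWeight T bag f univ x * ∏ e ∈ T.edgeFinset, separatorMarginal bag f e x =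
      ∏ X, f X x := by
  simp only [junctionWeight, sym2_univ, mem_univ, filter_true, Pi.div_apply, Finset.prod_apply]
  refine div_mul_cancel_of_imp fun h ↦ ?_
  obtain ⟨e, -, he⟩ := prod_eq_zero_iff.1 h
  exact hf.prod_eq_zero_of_separatorMarginal_eq_zero he

end JunctionWeight

/-- Since `0 / 0 = 0`, the quotient in `hc` is the indicator of the support of the marginal. -/
theorem IsConsistentFamily.expect_pow_card_div_prod_le [Fintype ι] (hf : IsConsistentFamily T bag f)
    (hT : IsJunctionTree T bag) (r : ι) {c : Sym2 ι → ℝ}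
    (hc : ∀ X Y, T.Adj X Y →
      𝔼 x, condAvg (bag X ∩ bag Y) (f X) x / condAvg (bag X ∩ bag Y) (f X) x ≤ c s(X, Y)) :
    (𝔼 x, f r x) ^ Fintype.card ι / ∏ e ∈ T.edgeFinset, c e ≤ 𝔼 x, ∏ X, f X x := by
  classical
  set w := junctionWeight T bag f univ with hw
  have hmarg := hf.condAvg_junctionWeight_univ hT
  have hmean : 𝔼 x, f r x = 𝔼 x, w x := by rw [← hmarg r, expect_condAvg]
  simp only [← hf.junctionWeight_univ_mul]
  rw [hmean, ← hT.isTree.card_edgeFinset]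
  refine expect_pow_succ_card_div_prod_le (hf.junctionWeight_nonneg univ)
    (fun e _ ↦ hf.separatorMarginal_nonneg e) (fun e _ x hwx hx ↦ hwx ?_) fun e he ↦ ?_
  · simp [hw, junctionWeight, hf.prod_eq_zero_of_separatorMarginal_eq_zero hx]
  · induction e with | _ X Y =>
    have hXY : T.Adj X Y := by simpa using he
    rw [hf.separatorMarginal_mk hXY, expect_div_of_dependsOn (dependsOn_condAvg _ _)]
    refine le_of_eq_of_le ?_ (hc X Y hXY)
    rw [← condAvg_condAvg_of_subset inter_subset_left, hmarg X]

end JunctionTree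

section HomDensity

open Finset BigOperators

variable {α β : Type*} {H : SimpleGraph α} {G : SimpleGraph β}

/-- `φ` restricts to a homomorphism from the subgraph of `H` induced on `A` to `G`. -/
def IsHomOn (H : SimpleGraph α) (G : SimpleGraph β) (A : Set α) (φ : α → β) : Prop :=
  ∀ ⦃u⦄, u ∈ A → ∀ ⦃v⦄, v ∈ A → H.Adj u v → G.Adj (φ u) (φ v)

open Classical in
/-- The indicator function of `IsHomOn H G A`, a function of the coordinates in `A` whose mean is
the homomorphism density of the subgraph of `H` induced on `A`. -/
noncomputable def homIndicator (H : SimpleGraph α) (G : SimpleGraph β) (A : Set α) (φ : α → β) :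
    ℝ :=
  if IsHomOn H G A φ then 1 else 0

lemma homIndicator_congr {α' : Type*} {H' : SimpleGraph α'} {A : Set α} {A' : Set α'}
    {φ : α → β} {φ' : α' → β} (h : IsHomOn H G A φ ↔ IsHomOn H' G A' φ') :
    homIndicator H G A φ = homIndicator H' G A' φ' := by
  classical
  exact if_congr h rfl rfl

lemma homIndicator_nonneg (A : Set α) : 0 ≤ homIndicator H G A := fun φ ↦ by
  unfold homIndicator
  split_ifs <;> simp

lemma dependsOn_homIndicator (A : Set α) : DependsOn (homIndicator H G A) A := fun φ ψ h ↦
  homIndicator_congr <| forall₂_congr fun u hu ↦ forall₂_congr fun v hv ↦ by rw [h u hu, h v hv]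

lemma prod_homIndicator {ι : Type*} [Fintype ι] {A : ι → Set α}
    (hA : ∀ u v, H.Adj u v → ∃ X, u ∈ A X ∧ v ∈ A X) (φ : α → β) :
    ∏ X, homIndicator H G (A X) φ = homIndicator H G Set.univ φ := by
  have hcover : (∀ X, IsHomOn H G (A X) φ) ↔ IsHomOn H G Set.univ φ := by
    refine ⟨fun h u _ v _ huv ↦ ?_, fun h X u _ v _ ↦ h trivial trivial⟩
    obtain ⟨X, hu, hv⟩ := hA u v huv
    exact h X hu hv huv
  classical
  simp only [homIndicator]
  exact Fintype.prod_boole.trans (if_congr hcover rfl rfl)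

variable [Fintype α] [Fintype β]

lemma homDensity_congr {γ : Type*} [Fintype γ] {J : SimpleGraph γ} (e : H ≃g J) :
    homDensity H G = homDensity J G := by
  rw [homDensity, homDensity, Fintype.card_congr e.toEquiv,
    Nat.card_congr (e.homCongr (.refl : G ≃g G))]

variable [DecidableEq α]

lemma homDensity_eq_expect : homDensity H G = 𝔼 φ, homIndicator H G Set.univ φ := by
  classical
  let e : (H →g G) ≃ {φ : α → β // IsHomOn H G Set.univ φ} :=
    { toFun f := ⟨f, fun _ _ _ _ huv ↦ f.map_adj huv⟩
      invFun φ := ⟨φ.1, fun huv ↦ φ.2 trivial trivial huv⟩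
      left_inv _ := rfl
      right_inv _ := rfl }
  rw [Fintype.expect_eq_sum_div_card, homDensity, Nat.card_congr e, Nat.card_eq_fintype_card,
    Fintype.card_subtype, Fintype.card_fun, Nat.cast_pow]
  simp only [homIndicator, sum_boole]

lemma homDensity_induce [Nonempty (α → β)] (A : Finset α) :
    homDensity (H.induce (A : Set α)) G = 𝔼 φ, homIndicator H G (A : Set α) φ := by
  rw [homDensity_eq_expect, ← expect_comp_restrict (π := fun _ ↦ β) A]
  refine expect_congr rfl fun φ _ ↦ homIndicator_congr ?_
  exact ⟨fun h u hu v hv huv ↦ h (u := ⟨u, hu⟩) trivial (v := ⟨v, hv⟩) trivial huv,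
    fun h u _ v _ huv ↦ h u.2 v.2 huv⟩

variable {A B : Finset α}

lemma condAvg_homIndicator_eq_of_iso (e : H.induce (A : Set α) ≃g H.induce (B : Set α))
    (he : ∀ (v : α) (hA : v ∈ A), v ∈ B → (e ⟨v, hA⟩ : α) = v) :
    condAvg (A ∩ B) (homIndicator H G (A : Set α)) =
      condAvg (A ∩ B) (homIndicator H G (B : Set α)) := by
  classical
  let σ : Equiv.Perm α := e.toEquiv.extendSubtype
  have hσ {v : α} (hv : v ∈ (A : Set α)) : σ v = e ⟨v, hv⟩ :=
    Equiv.extendSubtype_apply_of_mem _ v hv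
  have hfix (v : α) (hv : v ∈ A ∩ B) : σ v = v := by
    obtain ⟨hA, hB⟩ := mem_inter.1 hv
    rw [hσ hA, he v hA hB]
  rw [← condAvg_comp_perm (homIndicator H G (A : Set α)) hfix]
  congr 1
  ext φ
  refine homIndicator_congr ⟨fun h u hu v hv huv ↦ ?_, fun h u hu v hv huv ↦ ?_⟩
  · have := h (e.symm ⟨u, hu⟩).2 (e.symm ⟨v, hv⟩).2 (e.symm.map_adj_iff.2 huv)
    simpa [hσ] using this
  · simp only [Function.comp_apply, hσ hu, hσ hv]
    exact h (e ⟨u, hu⟩).2 (e ⟨v, hv⟩).2 (e.map_adj_iff.2 huv)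

lemma condAvg_homIndicator_div_self_le (hAB : A ⊆ B) (φ : α → β) :
    condAvg A (homIndicator H G (B : Set α)) φ / condAvg A (homIndicator H G (B : Set α)) φ ≤
      homIndicator H G (A : Set α) φ := by
  by_cases hφ : IsHomOn H G (A : Set α) φ
  · rw [homIndicator, if_pos hφ]
    exact div_self_le_one _
  · have hzero : condAvg A (homIndicator H G (B : Set α)) φ = 0 :=
      expect_eq_zero fun ψ _ ↦ if_neg fun h ↦ hφ fun u hu v hv huv ↦ by
        simpa [mem_coe.1 hu, mem_coe.1 hv] using h (hAB hu) (hAB hv) huv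
    rw [hzero, div_zero]
    exact homIndicator_nonneg _ φ

end HomDensity

section JDecomposition

variable {α β γ ι : Type*} [DecidableEq α] {H : SimpleGraph α} {G : SimpleGraph β}
  {J : SimpleGraph γ} {bag : ι → Finset α} {T : SimpleGraph ι}

lemma IsJDecomp.nonempty_fun (h : IsJDecomp H J bag T) (hhom : Nonempty (J →g G)) :
    Nonempty (α → β) := by
  obtain ⟨f⟩ := hhom
  refine Classical.nonempty_pi.2 fun v ↦ ?_
  obtain ⟨X, hv⟩ := h.1.2.1 v
  obtain ⟨e⟩ := h.2.1 X
  exact ⟨f (e ⟨v, hv⟩)⟩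

lemma IsJDecomp.isConsistentFamily_homIndicator [Fintype α] [Fintype β]
    (h : IsJDecomp H J bag T) (G : SimpleGraph β) :
    IsConsistentFamily T bag fun X ↦ homIndicator H G (bag X : Set α) where
  nonneg X := homIndicator_nonneg _
  dependsOn X := dependsOn_homIndicator _
  condAvg_eq {X Y} hXY := by
    obtain ⟨e, he⟩ := h.2.2 X Y hXY
    exact condAvg_homIndicator_eq_of_iso e he

end JDecomposition

theorem stmt6 {α β γ : Type*} [Fintype α] [DecidableEq α] [Fintype β] [Fintype γ]
    (G : SimpleGraph β) (H : SimpleGraph α) (J : SimpleGraph γ)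
    (ι : Type) [Fintype ι] [DecidableEq ι]
    (bag : ι → Finset α) (T : SimpleGraph ι) [DecidableRel T.Adj]
    (hdec : IsJDecomp H J bag T)
    (hhom : Nonempty (J →g G)) :
    homDensity H G ≥
      homDensity J G ^ (Fintype.card ι) /
        ∏ e ∈ T.edgeFinset,
          Sym2.lift
            ⟨fun X Y => homDensity (H.induce ↑(bag X ∩ bag Y)) G,
             fun X Y => by simp only []; rw [Finset.inter_comm]⟩ e := by
  have : Nonempty (α → β) := hdec.nonempty_fun hhom
  have hcover : ∀ u v, H.Adj u v → ∃ X, u ∈ bag X ∧ v ∈ bag X := hdec.1.2.2.1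
  obtain ⟨r⟩ := hdec.1.1.connected.nonempty
  obtain ⟨e⟩ := hdec.2.1 r
  rw [← homDensity_congr e, homDensity_induce, homDensity_eq_expect]
  simp only [← prod_homIndicator hcover]
  refine (hdec.isConsistentFamily_homIndicator G).expect_pow_card_div_prod_le
    hdec.1.isJunctionTree r fun X Y _ ↦ ?_
  calc _ ≤ Finset.univ.expect (homIndicator H G ↑(bag X ∩ bag Y)) :=
        Finset.expect_le_expect fun φ _ ↦
          condAvg_homIndicator_div_self_le Finset.inter_subset_left φ
    _ = homDensity (H.induce ↑(bag X ∩ bag Y)) G := (homDensity_induce _).symm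
end

section
/- For every η > 0 and every integer r ≥ 2 there exists ρ > 0 and n₀ such that for every d ∈ (0,1] and every (ρ,d)-dense graph G with at least n₀ vertices, t_{K_r}(G) ≥ d^{r(r−1)/2} − η, where K_r is the complete graph on r vertices. -/
open MeasureTheory

/-!
Fix a vertex set `X` of a `(ρ, d)`-dense graph on `n` vertices. The ordered `(r + 1)`-cliques in
`X` are the pairs of a vertex `v ∈ X` and an ordered `r`-clique in the neighbourhood of `v` in `X`.
If `|X| ≥ ρ n`, these neighbourhoods have average size at least `d |X|` by the handshaking lemma,
so convexity of `x ↦ x ^ r` and induction on `r` bound the number of ordered `r`-cliques in `X`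
from below by `d ^ (r.choose 2) * |X| ^ r - ρ * n ^ r`. If `|X| < ρ n` and `r ≥ 1`, that
bound is nonpositive. Taking `X` to be the whole vertex set shows that `ρ = η` works for every `r`.
-/

open Finset Function

theorem card_mul_pow_le_sum_pow {ι 𝕜 : Type*} [Field 𝕜] [LinearOrder 𝕜] [IsStrictOrderedRing 𝕜]
    {s : Finset ι} {f : ι → 𝕜} {c : 𝕜} (hf : ∀ i ∈ s, 0 ≤ f i) (hc : 0 ≤ c)
    (h : #s * c ≤ ∑ i ∈ s, f i) (r : ℕ) : #s * c ^ r ≤ ∑ i ∈ s, f i ^ r := by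
  rcases s.eq_empty_or_nonempty with rfl | hs
  · simp
  cases r with
  | zero => simp
  | succ k =>
    calc #s * c ^ (k + 1) = (#s * c) ^ (k + 1) / #s ^ k := by field_simp; ring
      _ ≤ (∑ i ∈ s, f i) ^ (k + 1) / #s ^ k := by gcongr
      _ ≤ ∑ i ∈ s, f i ^ (k + 1) := pow_sum_div_card_le_sum_pow hf k

theorem pow_mul_pow_succ_le {𝕜 : Type*} [CommSemiring 𝕜] [PartialOrder 𝕜] [IsOrderedRing 𝕜]
    {c d x y : 𝕜} (hd : 0 ≤ d) (hd1 : d ≤ 1) (hx : 0 ≤ x) (hxy : x ≤ y) (hxcy : x ≤ c * y)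
    (k r : ℕ) : d ^ k * x ^ (r + 1) ≤ c * y ^ (r + 1) :=
  calc d ^ k * x ^ (r + 1) ≤ x ^ (r + 1) :=
        mul_le_of_le_one_left (pow_nonneg hx _) (pow_le_one₀ hd hd1)
    _ = x * x ^ r := pow_succ' _ _
    _ ≤ c * y * y ^ r :=
        mul_le_mul hxcy (pow_le_pow_left₀ hx hxy r) (pow_nonneg hx r) (hx.trans hxcy)
    _ = c * y ^ (r + 1) := by ring

theorem pairwise_on_finCons_iff {α : Type*} {R : α → α → Prop} [Std.Symm R] {r : ℕ} {a : α}
    {f : Fin r → α} :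
    Pairwise (R on (Fin.cons a f : Fin (r + 1) → α)) ↔ (∀ i, R a (f i)) ∧ Pairwise (R on f) := by
  simp only [Pairwise, onFun, Fin.forall_fin_succ, Fin.cons_zero, Fin.cons_succ, ne_eq,
    Fin.succ_inj, Fin.succ_ne_zero, (Fin.succ_ne_zero _).symm, not_true_eq_false,
    not_false_eq_true, false_imp_iff, true_imp_iff, true_and, comm_of R (b := a), forall_and,
    and_self_left]

section OrderedCliques

open scoped Classical in
/-- The ordered `r`-cliques of `G` inside `X`: the tuples of `r` pairwise adjacent vertices of `X`.
For `X = univ` these are the homomorphisms from the complete graph on `Fin r` to `G`; letting `X`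
vary makes it possible to count them by induction on `r`. -/
noncomputable def orderedCliques {V : Type*} (G : SimpleGraph V) (r : ℕ) (X : Finset V) :
    Finset (Fin r → V) :=
  {f ∈ Fintype.piFinset fun _ ↦ X | Pairwise (G.Adj on f)}

variable {V : Type*} {G : SimpleGraph V} {r : ℕ} {X : Finset V}

theorem mem_orderedCliques {f : Fin r → V} :
    f ∈ orderedCliques G r X ↔ (∀ i, f i ∈ X) ∧ Pairwise (G.Adj on f) := by
  simp only [orderedCliques, mem_filter, Fintype.mem_piFinset]

variable [DecidableRel G.Adj]

theorem cons_mem_orderedCliques {v : V} {f : Fin r → V} :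
    (Fin.cons v f : Fin (r + 1) → V) ∈ orderedCliques G (r + 1) X ↔
      v ∈ X ∧ f ∈ orderedCliques G r {w ∈ X | G.Adj v w} := by
  have : Std.Symm G.Adj := G.symm
  simp only [mem_orderedCliques, pairwise_on_finCons_iff, Fin.forall_fin_succ, Fin.cons_zero,
    Fin.cons_succ, mem_filter, forall_and, and_assoc]

theorem card_orderedCliques_succ :
    #(orderedCliques G (r + 1) X) = ∑ v ∈ X, #(orderedCliques G r {w ∈ X | G.Adj v w}) := by
  rw [← card_sigma]
  refine card_nbij' (fun f ↦ ⟨f 0, Fin.tail f⟩) (fun p ↦ Fin.cons p.1 p.2) ?_ ?_ ?_ ?_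
  · intro f hf
    rw [mem_coe, ← Fin.cons_self_tail f, cons_mem_orderedCliques] at hf
    exact mem_sigma.2 hf
  · intro p hp
    exact cons_mem_orderedCliques.2 (mem_sigma.1 hp)
  · exact fun f _ ↦ Fin.cons_self_tail f
  · exact fun _ _ ↦ rfl

end OrderedCliques

theorem card_orderedCliques_univ {V : Type*} [Fintype V] (G : SimpleGraph V) (r : ℕ) :
    #(orderedCliques G r univ) = Nat.card ((⊤ : SimpleGraph (Fin r)) →g G) := by
  rw [← Nat.card_eq_finsetCard]
  exact Nat.card_congr
    { toFun f := ⟨f, fun h ↦ (mem_orderedCliques.1 f.2).2 h⟩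
      invFun φ := ⟨φ, mem_orderedCliques.2 ⟨fun _ ↦ mem_univ _, fun _ _ h ↦ φ.map_rel h⟩⟩ }

theorem sum_card_filter_adj_eq_twice_card_edges {V : Type*} (G : SimpleGraph V)
    [DecidableRel G.Adj] (X : Finset V) :
    ∑ v ∈ X, #{w ∈ X | G.Adj v w} =
      2 * Nat.card {e : Sym2 V // e ∈ G.edgeSet ∧ ∀ v ∈ e, v ∈ X} := by
  classical
  have hdeg (v : (X : Set V)) : (G.induce (X : Set V)).degree v = #{w ∈ X | G.Adj v w} := by
    rw [← SimpleGraph.card_neighborFinset_eq_degree, ← card_map (.subtype (· ∈ (X : Set V)))]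
    congr 1
    ext w
    simp [and_comm]
  have hedges : #(G.induce (X : Set V)).edgeFinset =
      Nat.card {e : Sym2 V // e ∈ G.edgeSet ∧ ∀ v ∈ e, v ∈ X} := by
    rw [← Set.ncard_coe_finset, SimpleGraph.coe_edgeFinset,
      ← Set.ncard_image_of_injective _ (Sym2.map.injective Subtype.val_injective)]
    change _ = Set.ncard {e : Sym2 V | e ∈ G.edgeSet ∧ ∀ v ∈ e, v ∈ X}
    congr 1
    ext e
    induction e with
    | _ a b =>
      simp only [Set.mem_image, Sym2.exists, Sym2.map_mk, Subtype.exists, Set.mem_ofPred_eq,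
        SimpleGraph.mem_edgeSet, SimpleGraph.comap_adj, Sym2.ball, Sym2.eq_iff, mem_coe,
        Embedding.subtype_apply]
      grind [G.adj_comm]
  rw [← hedges, ← SimpleGraph.sum_degrees_eq_twice_card_edges, ← sum_coe_sort]
  exact sum_congr rfl fun v _ ↦ (hdeg v).symm

section LocallyDense

variable {V : Type*} [Fintype V] {G : SimpleGraph V} {ρ d : ℝ} {X : Finset V}

theorem LocallyDense.card_mul_pow_le_sum_card_filter_adj_pow [DecidableRel G.Adj]
    (hG : LocallyDense G ρ d) (hd : 0 ≤ d) (hX : ρ * Fintype.card V ≤ #X) (r : ℕ) :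
    #X * (d * #X) ^ r ≤ ∑ v ∈ X, (#{w ∈ X | G.Adj v w} : ℝ) ^ r := by
  refine card_mul_pow_le_sum_pow (fun _ _ ↦ by positivity) (by positivity) ?_ r
  have hsum := sum_card_filter_adj_eq_twice_card_edges G X
  have hedges := hG X hX
  rify at hsum
  linarith

theorem LocallyDense.le_card_orderedCliques (hG : LocallyDense G ρ d) (hρ : 0 ≤ ρ) (hd : 0 ≤ d)
    (hd1 : d ≤ 1) (r : ℕ) (X : Finset V) :
    d ^ r.choose 2 * (#X : ℝ) ^ r - ρ * (Fintype.card V : ℝ) ^ r ≤ #(orderedCliques G r X) := by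
  classical
  induction r generalizing X with
  | zero => simpa [orderedCliques, Subsingleton.pairwise] using hρ
  | succ r ih =>
    set n : ℝ := (Fintype.card V : ℝ)
    have hXn : (#X : ℝ) ≤ n := Nat.cast_le.2 X.card_le_univ
    rcases le_total (#X : ℝ) (ρ * n) with hX | hX
    · have hnonpos : d ^ (r + 1).choose 2 * (#X : ℝ) ^ (r + 1) - ρ * n ^ (r + 1) ≤ 0 :=
        sub_nonpos.2 <| pow_mul_pow_succ_le hd hd1 (Nat.cast_nonneg _) hXn hX _ r
      exact hnonpos.trans (Nat.cast_nonneg _)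
    have hchoose : (r + 1).choose 2 = r.choose 2 + r := by
      rw [Nat.choose_succ_succ', Nat.choose_one_right, add_comm]
    calc d ^ (r + 1).choose 2 * (#X : ℝ) ^ (r + 1) - ρ * n ^ (r + 1)
        = d ^ r.choose 2 * (#X * (d * #X) ^ r) - n * (ρ * n ^ r) := by rw [hchoose]; ring
      _ ≤ d ^ r.choose 2 * ∑ v ∈ X, (#{w ∈ X | G.Adj v w} : ℝ) ^ r - #X * (ρ * n ^ r) := by
        gcongr
        exact hG.card_mul_pow_le_sum_card_filter_adj_pow hd hX r
      _ = ∑ v ∈ X, (d ^ r.choose 2 * (#{w ∈ X | G.Adj v w} : ℝ) ^ r - ρ * n ^ r) := by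
        rw [sum_sub_distrib, mul_sum, sum_const, nsmul_eq_mul]
      _ ≤ ∑ v ∈ X, (#(orderedCliques G r {w ∈ X | G.Adj v w}) : ℝ) := sum_le_sum fun v _ ↦ ih _
      _ = #(orderedCliques G (r + 1) X) := by rw [card_orderedCliques_succ, Nat.cast_sum]

theorem stmt7_general [Nonempty V] (hG : LocallyDense G ρ d) (hρ : 0 ≤ ρ) (hd : 0 ≤ d)
    (hd1 : d ≤ 1) (r : ℕ) :
    d ^ r.choose 2 - ρ ≤ homDensity (⊤ : SimpleGraph (Fin r)) G := by
  have hcount := hG.le_card_orderedCliques hρ hd hd1 r univ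
  rw [card_orderedCliques_univ, card_univ, ← sub_mul] at hcount
  rw [homDensity, Fintype.card_fin]
  exact (le_div_iff₀ (by positivity)).2 hcount

end LocallyDense

theorem stmt7 (η : ℝ) (hη : 0 < η) (r : ℕ) (hr : 2 ≤ r) :
    ∃ (ρ : ℝ) (n₀ : ℕ), 0 < ρ ∧
      ∀ (d : ℝ), 0 < d → d ≤ 1 →
        ∀ (β : Type) [Fintype β] (G : SimpleGraph β),
          n₀ ≤ Fintype.card β → LocallyDense G ρ d →
            homDensity (⊤ : SimpleGraph (Fin r)) G ≥ d ^ (r * (r - 1) / 2) - η := by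
  refine ⟨η, 1, hη, fun d hd hd1 β _ G hn hG ↦ ?_⟩
  have : Nonempty β := Fintype.card_pos_iff.1 hn
  rw [← Nat.choose_two_right]
  exact stmt7_general hG hη.le hd.le hd1 r
end

section
/- Let δ > 0 and let ℓ and r be positive integers with ℓ ≤ 2r. Then there exists ρ > 0 and n₀ such that for every d ∈ (0,1] and every (ρ,d)-dense graph G with at least n₀ vertices, t_{C_{2r+1}}(G) ≥ (d − δ) · t_{P_ℓ}(G)^{2r/ℓ}. -/
open MeasureTheory

/-!
Write `A` for the adjacency matrix and `n` for the number of vertices. Path densities are the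
moments `⟨1, (A / n) ^ k 1⟩ / n`, that is, moments of the spectral measure of `A / n` at the
normalized constant vector, so Jensen's inequality gives `t_{P_ℓ} ^ (2r / ℓ) ≤ t_{P_2r}`.

Deleting from the cycle `C_{2r+1}` the edge opposite a vertex `v` leaves two walks of length `r`
from `v`, so the cycle density is an average over `v` of the quadratic form of `A` at the `v`-th row
of `A ^ r`. Local density says that this form is at least `d * |X| ^ 2` on indicators of large
sets `X`; as `A - d` has nonpositive diagonal, its form is concave in each coordinate, and the bound
extends to all vectors in `[0, 1]^V` with an error `(ρ n) ^ 2` coming from the small sets. Hence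
`t_{C_{2r+1}} ≥ d * t_{P_2r} - ρ ^ 2`, and since `d ^ (2r) ≤ t_{P_2r}`, the error `ρ ^ 2` is
absorbed by `δ * t_{P_2r}`.
-/

open Finset Matrix

section QuadraticForms

variable {n : Type*} [Fintype n] [DecidableEq n] {A : Matrix n n ℝ}

theorem dotProduct_pow_mulVec_eq_sum_eigenvalues (hA : A.IsHermitian) (v : n → ℝ) (k : ℕ) :
    v ⬝ᵥ A ^ k *ᵥ v =
      ∑ i, ((hA.eigenvectorUnitary : Matrix n n ℝ)ᵀ *ᵥ v) i ^ 2 * hA.eigenvalues i ^ k := by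
  set U : Matrix n n ℝ := ↑hA.eigenvectorUnitary with hU
  have hpow : A ^ k = U * diagonal (fun i ↦ hA.eigenvalues i ^ k) * Uᵀ := by
    conv_lhs => rw [hA.spectral_theorem, ← map_pow, diagonal_pow]
    simp [Unitary.conjStarAlgAut_apply, star_eq_conjTranspose, Pi.pow_def, hU]
  rw [hpow, ← mulVec_mulVec, ← mulVec_mulVec, dotProduct_mulVec, ← mulVec_transpose]
  simp only [dotProduct, mulVec_diagonal]
  exact sum_congr rfl fun i _ ↦ by ring

theorem rpow_abs_dotProduct_pow_mulVec_le (hA : A.IsHermitian) {v : n → ℝ} (hv : v ≠ 0)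
    {ℓ m : ℕ} (hℓ : 0 < ℓ) (hℓm : ℓ ≤ m) (hm : Even m) :
    (|v ⬝ᵥ A ^ ℓ *ᵥ v| / (v ⬝ᵥ v)) ^ ((m : ℝ) / ℓ) ≤ (v ⬝ᵥ A ^ m *ᵥ v) / (v ⬝ᵥ v) := by
  set w : n → ℝ := fun i ↦
    ((hA.eigenvectorUnitary : Matrix n n ℝ)ᵀ *ᵥ v) i ^ 2 / (v ⬝ᵥ v)
  have hvv : 0 < v ⬝ᵥ v := by simpa using dotProduct_star_self_pos_iff.2 hv
  have hw : ∀ i, 0 ≤ w i := fun i ↦ by positivity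
  have hmoment (k : ℕ) : (v ⬝ᵥ A ^ k *ᵥ v) / (v ⬝ᵥ v) = ∑ i, w i * hA.eigenvalues i ^ k := by
    rw [dotProduct_pow_mulVec_eq_sum_eigenvalues hA, sum_div]
    exact sum_congr rfl fun i _ ↦ by ring
  have hw_sum : ∑ i, w i = 1 := by simpa [hvv.ne'] using (hmoment 0).symm
  have hpow (i : n) : (|hA.eigenvalues i| ^ ℓ) ^ ((m : ℝ) / ℓ) = hA.eigenvalues i ^ m := by
    rw [← Real.rpow_natCast_mul (abs_nonneg _), mul_div_cancel₀ _ (by positivity),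
      Real.rpow_natCast, hm.pow_abs]
  calc (|v ⬝ᵥ A ^ ℓ *ᵥ v| / (v ⬝ᵥ v)) ^ ((m : ℝ) / ℓ)
      = |∑ i, w i * hA.eigenvalues i ^ ℓ| ^ ((m : ℝ) / ℓ) := by
        rw [← hmoment, abs_div, abs_of_pos hvv]
    _ ≤ (∑ i, w i * |hA.eigenvalues i| ^ ℓ) ^ ((m : ℝ) / ℓ) := by
        gcongr
        refine (abs_sum_le_sum_abs _ _).trans_eq (sum_congr rfl fun i _ ↦ ?_)
        rw [abs_mul, abs_of_nonneg (hw i), abs_pow]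
    _ ≤ ∑ i, w i * (|hA.eigenvalues i| ^ ℓ) ^ ((m : ℝ) / ℓ) :=
        Real.rpow_arith_mean_le_arith_mean_rpow _ _ _ (fun i _ ↦ hw i) hw_sum
          (fun i _ ↦ by positivity) ((one_le_div (by positivity)).2 (by exact_mod_cast hℓm))
    _ = (v ⬝ᵥ A ^ m *ᵥ v) / (v ⬝ᵥ v) := by simp_rw [hpow, ← hmoment]

theorem concaveOn_dotProduct_mulVec_update {i : n} (hA : A i i ≤ 0) (x : n → ℝ) :
    ConcaveOn ℝ Set.univ fun t ↦ Function.update x i t ⬝ᵥ A *ᵥ Function.update x i t := by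
  set y := Function.update x i 0 with hy
  have hupdate (t : ℝ) : Function.update x i t = y + t • Pi.single i 1 := by
    ext j
    obtain rfl | hj := eq_or_ne j i <;> simp [*]
  have hquad (t : ℝ) : Function.update x i t ⬝ᵥ A *ᵥ Function.update x i t =
      y ⬝ᵥ A *ᵥ y + t * (y ⬝ᵥ A.col i + (A *ᵥ y) i) + t ^ 2 * A i i := by
    simp only [hupdate, mulVec_add, mulVec_smul, dotProduct_add, add_dotProduct, smul_dotProduct,
      dotProduct_smul, single_one_dotProduct, mulVec_single_one, smul_eq_mul, col_apply]
    ring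
  refine ⟨convex_univ, fun s _ t _ a b ha hb hab ↦ ?_⟩
  obtain rfl : b = 1 - a := by linarith
  simp only [hquad, smul_eq_mul]
  nlinarith [mul_nonneg (mul_nonneg ha hb) (mul_nonneg (sq_nonneg (s - t)) (neg_nonneg.2 hA))]

end QuadraticForms

theorem le_of_separately_concaveOn_Icc {ι : Type*} [Finite ι] [DecidableEq ι] {a b : ι → ℝ}
    {F : (ι → ℝ) → ℝ} {C : ℝ}
    (hF : ∀ x ∈ Set.Icc a b, ∀ i,
      ConcaveOn ℝ (Set.Icc (a i) (b i)) fun t ↦ F (Function.update x i t))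
    (hC : ∀ x, (∀ i, x i = a i ∨ x i = b i) → C ≤ F x) {x : ι → ℝ} (hx : x ∈ Set.Icc a b) :
    C ≤ F x := by
  have := Fintype.ofFinite ι
  suffices H : ∀ (s : Finset ι), ∀ x ∈ Set.Icc a b, (∀ i ∉ s, x i = a i ∨ x i = b i) → C ≤ F x from
    H univ x hx (by simp)
  intro s
  induction s using Finset.induction_on with
  | empty => exact fun x _ hxs ↦ hC x fun i ↦ hxs i (notMem_empty i)
  | insert i s _ ih =>
    intro x hx hxs
    have hab : a i ≤ b i := (hx.1 i).trans (hx.2 i)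
    have hvertex {t : ℝ} (ht : t = a i ∨ t = b i) : C ≤ F (Function.update x i t) := by
      refine ih _ ⟨fun j ↦ ?_, fun j ↦ ?_⟩ fun j hj ↦ ?_ <;> obtain rfl | hji := eq_or_ne j i
      · rcases ht with rfl | rfl <;> simp [hab]
      · simpa [hji] using hx.1 j
      · rcases ht with rfl | rfl <;> simp [hab]
      · simpa [hji] using hx.2 j
      · simpa using ht
      · simpa [hji] using hxs j (by simp [hji, hj])
    have hmin := (hF x hx i).min_le_of_mem_Icc (Set.left_mem_Icc.2 hab) (Set.right_mem_Icc.2 hab)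
      ⟨hx.1 i, hx.2 i⟩
    simp only [Function.update_eq_self] at hmin
    exact (le_min (hvertex (.inl rfl)) (hvertex (.inr rfl))).trans hmin

section SymmetricMatrix

variable {n R : Type*} [Fintype n] [CommSemiring R] {M : Matrix n n R}

theorem one_dotProduct_mul_self_mulVec_one (hM : M.IsSymm) :
    1 ⬝ᵥ (M * M) *ᵥ 1 = ∑ i, (∑ j, M i j) ^ 2 := by
  rw [← mulVec_mulVec, dotProduct_mulVec, ← mulVec_transpose, hM.eq]
  simp [dotProduct, mulVec, sq]

theorem trace_mul_mul_self (hM : M.IsSymm) (A : Matrix n n R) :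
    (M * A * M).trace = ∑ i, M i ⬝ᵥ A *ᵥ M i := by
  refine sum_congr rfl fun i _ ↦ ?_
  rw [diag_apply, mul_mul_apply, hM.eq]

end SymmetricMatrix

section HomCounting

theorem sum_prod_consecutive_mul_eq_sum_pow_mul {n R : Type*} [Fintype n] [DecidableEq n]
    [CommSemiring R] (A : Matrix n n R) (k : ℕ) (F : n → n → R) :
    ∑ p : Fin (k + 1) → n, (∏ s : Fin k, A (p s.castSucc) (p s.succ)) * F (p 0) (p (Fin.last k)) =
      ∑ i, ∑ j, (A ^ k) i j * F i j := by
  induction k generalizing F with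
  | zero =>
    rw [← (Equiv.funUnique (Fin 1) n).symm.sum_comp]
    simp [one_apply]
  | succ k ih =>
    have hsnoc (x : n) (q : Fin (k + 1) → n) : (Fin.snoc q x : Fin (k + 2) → n) 0 = q 0 :=
      Fin.snoc_castSucc (α := fun _ ↦ n) x q 0
    rw [← (Fin.snocEquiv fun _ : Fin (k + 2) ↦ n).sum_comp, Fintype.sum_prod_type]
    simp only [Fin.snocEquiv, Equiv.coe_fn_mk, Fin.prod_univ_castSucc, Fin.snoc_last, Fin.succ_last,
      Fin.snoc_castSucc, Fin.succ_castSucc, hsnoc, mul_assoc]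
    calc _ = ∑ x, ∑ i, ∑ j, (A ^ k) i j * (A j x * F i x) :=
          sum_congr rfl fun x _ ↦ ih fun i j ↦ A j x * F i x
      _ = ∑ i, ∑ x, ∑ j, (A ^ k) i j * (A j x * F i x) := sum_comm
      _ = ∑ i, ∑ x, (A ^ (k + 1)) i x * F i x := by
          simp_rw [pow_succ, mul_apply, sum_mul, mul_assoc]

theorem pathGraph_edgeSet (k : ℕ) :
    (SimpleGraph.pathGraph (k + 1)).edgeSet = Set.range fun s : Fin k ↦ s(s.castSucc, s.succ) := by
  ext e
  induction e with | h a b =>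
  simp only [SimpleGraph.mem_edgeSet, SimpleGraph.pathGraph_adj, Set.mem_range, Sym2.eq_iff,
    Fin.ext_iff, Fin.val_castSucc, Fin.val_succ]
  constructor
  · rintro (hab | hba)
    · exact ⟨⟨a, by omega⟩, .inl ⟨rfl, hab⟩⟩
    · exact ⟨⟨b, by omega⟩, .inr ⟨rfl, hba⟩⟩
  · rintro ⟨s, ⟨ha, hb⟩ | ⟨hb, ha⟩⟩ <;> omega

theorem cycleGraph_edgeSet (k : ℕ) :
    (SimpleGraph.cycleGraph (k + 2)).edgeSet = Set.range fun s : Fin (k + 2) ↦ s(s, s + 1) := by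
  ext e
  induction e with | h a b =>
  simp only [SimpleGraph.mem_edgeSet, SimpleGraph.cycleGraph_adj, Set.mem_range, Sym2.eq_iff,
    sub_eq_iff_eq_add']
  constructor
  · rintro (rfl | rfl)
    · exact ⟨b, .inr ⟨rfl, rfl⟩⟩
    · exact ⟨a, .inl ⟨rfl, rfl⟩⟩
  · rintro ⟨s, ⟨rfl, rfl⟩ | ⟨rfl, rfl⟩⟩ <;> simp [add_comm]

variable {V : Type*} [Fintype V] (G : SimpleGraph V) [DecidableRel G.Adj]

theorem card_hom_eq_sum_prod_adjMatrix {α ι R : Type*} [Fintype α] [DecidableEq α] [Fintype ι]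
    [CommSemiring R] {H : SimpleGraph α} {u v : ι → α}
    (hH : H.edgeSet = Set.range fun s ↦ s(u s, v s)) :
    (Nat.card (H →g G) : R) = ∑ p : α → V, ∏ s, G.adjMatrix R (p (u s)) (p (v s)) := by
  have hhom (p : α → V) :
      (∀ {a b}, H.Adj a b → G.Adj (p a) (p b)) ↔ ∀ s, G.Adj (p (u s)) (p (v s)) := by
    simp_rw [← SimpleGraph.mem_edgeSet H, hH, Set.mem_range]
    refine ⟨fun h s ↦ h ⟨s, rfl⟩, fun h a b ⟨s, hs⟩ ↦ ?_⟩
    obtain ⟨rfl, rfl⟩ | ⟨rfl, rfl⟩ := Sym2.eq_iff.1 hs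
    exacts [h s, (h s).symm]
  let e : (H →g G) ≃ {p : α → V // ∀ s, G.Adj (p (u s)) (p (v s))} :=
    { toFun f := ⟨f, (hhom f).1 f.map_adj⟩
      invFun p := ⟨p.1, (hhom p.1).2 p.2⟩ }
  simp only [SimpleGraph.adjMatrix_apply, prod_ite_zero, prod_const_one, mem_univ, forall_const]
  rw [Nat.card_congr e, Nat.card_eq_fintype_card, Fintype.card_subtype, sum_boole]

variable [DecidableEq V]

theorem homDensity_pathGraph (k : ℕ) :
    homDensity (SimpleGraph.pathGraph (k + 1)) G =
      (1 ⬝ᵥ G.adjMatrix ℝ ^ k *ᵥ 1) / (Fintype.card V : ℝ) ^ (k + 1) := by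
  have hsum := sum_prod_consecutive_mul_eq_sum_pow_mul (G.adjMatrix ℝ) k fun _ _ ↦ 1
  rw [homDensity, card_hom_eq_sum_prod_adjMatrix G (pathGraph_edgeSet k), Fintype.card_fin]
  simp_all [dotProduct, mulVec]

theorem homDensity_cycleGraph {k : ℕ} (hk : 2 ≤ k) :
    homDensity (SimpleGraph.cycleGraph k) G =
      (G.adjMatrix ℝ ^ k).trace / (Fintype.card V : ℝ) ^ k := by
  obtain ⟨k, rfl⟩ := Nat.exists_eq_add_of_le' hk
  have hsum := sum_prod_consecutive_mul_eq_sum_pow_mul (G.adjMatrix ℝ) (k + 1)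
    fun i j ↦ G.adjMatrix ℝ j i
  rw [homDensity, card_hom_eq_sum_prod_adjMatrix G (cycleGraph_edgeSet k), Fintype.card_fin,
    pow_succ (G.adjMatrix ℝ), trace]
  simp only [diag_apply, mul_apply, ← hsum]
  simp [Fin.prod_univ_castSucc (n := k + 1)]

end HomCounting

theorem homDensity_nonneg {α β : Type*} [Fintype α] [Fintype β] (H : SimpleGraph α)
    (G : SimpleGraph β) : 0 ≤ homDensity H G := by
  unfold homDensity
  positivity

theorem homDensity_pathGraph_rpow_le {V : Type*} [Fintype V] [Nonempty V] (G : SimpleGraph V)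
    {ℓ m : ℕ} (hℓ : 0 < ℓ) (hℓm : ℓ ≤ m) (hm : Even m) :
    homDensity (SimpleGraph.pathGraph (ℓ + 1)) G ^ ((m : ℝ) / ℓ) ≤
      homDensity (SimpleGraph.pathGraph (m + 1)) G := by
  classical
  set T : Matrix V V ℝ := (Fintype.card V : ℝ)⁻¹ • G.adjMatrix ℝ
  have hT : T.IsHermitian := (G.isHermitian_adjMatrix ℝ).smul (IsSelfAdjoint.all _)
  have hdensity (k : ℕ) :
      homDensity (SimpleGraph.pathGraph (k + 1)) G = (1 ⬝ᵥ T ^ k *ᵥ 1) / (1 ⬝ᵥ (1 : V → ℝ)) := by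
    rw [homDensity_pathGraph, smul_pow, smul_mulVec, dotProduct_smul, one_dotProduct_one,
      smul_eq_mul, inv_pow, pow_succ, inv_mul_eq_div, div_div]
  have habs : |1 ⬝ᵥ T ^ ℓ *ᵥ 1| / (1 ⬝ᵥ (1 : V → ℝ)) =
      homDensity (SimpleGraph.pathGraph (ℓ + 1)) G := by
    rw [← abs_of_nonneg (homDensity_nonneg _ G), hdensity, abs_div, one_dotProduct_one,
      Nat.abs_cast]
  have hmean := rpow_abs_dotProduct_pow_mulVec_le hT (one_ne_zero (α := V → ℝ)) hℓ hℓm hm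
  rwa [habs, ← hdensity] at hmean

theorem sum_sum_adjMatrix_eq_two_mul_card_edges {V : Type*} (G : SimpleGraph V)
    [DecidableRel G.Adj] (X : Finset V) :
    ∑ x ∈ X, ∑ y ∈ X, G.adjMatrix ℝ x y =
      2 * Nat.card {e : Sym2 V // e ∈ G.edgeSet ∧ ∀ v ∈ e, v ∈ X} := by
  classical
  have hedges : Nat.card {e : Sym2 V // e ∈ G.edgeSet ∧ ∀ v ∈ e, v ∈ X} =
      #(G.induce {v | v ∈ X}).edgeFinset := by
    rw [← card_map (Function.Embedding.subtype (· ∈ X)).sym2Map]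
    refine Nat.subtype_card _ fun e ↦ ?_
    induction e with | h a b =>
    simp only [mem_map, SimpleGraph.mem_edgeFinset, SimpleGraph.mem_edgeSet, Sym2.ball]
    constructor
    · rintro ⟨e, he, hab⟩
      induction e with | h x y =>
      obtain ⟨rfl, rfl⟩ | ⟨rfl, rfl⟩ := Sym2.eq_iff.1 hab
      exacts [⟨he, x.2, y.2⟩, ⟨he.symm, y.2, x.2⟩]
    · rintro ⟨hab, ha, hb⟩
      exact ⟨s(⟨a, ha⟩, ⟨b, hb⟩), hab, rfl⟩
  calc ∑ x ∈ X, ∑ y ∈ X, G.adjMatrix ℝ x y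
      = ∑ x : {v // v ∈ X}, ((G.induce {v | v ∈ X}).degree x : ℝ) := by
        rw [← sum_coe_sort X]
        refine sum_congr rfl fun x _ ↦ ?_
        rw [← sum_coe_sort X, ← SimpleGraph.card_neighborFinset_eq_degree,
          SimpleGraph.neighborFinset_eq_filter]
        simp
    _ = 2 * Nat.card {e : Sym2 V // e ∈ G.edgeSet ∧ ∀ v ∈ e, v ∈ X} := by
        rw [hedges]
        exact_mod_cast (G.induce {v | v ∈ X}).sum_degrees_eq_twice_card_edges

section AdjMatrix

variable {V : Type*} [Fintype V] [DecidableEq V] (G : SimpleGraph V) [DecidableRel G.Adj]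

theorem adjMatrix_pow_apply_nonneg (k : ℕ) (i j : V) : 0 ≤ (G.adjMatrix ℝ ^ k) i j := by
  rw [G.adjMatrix_pow_apply_eq_card_walk]
  positivity

theorem adjMatrix_pow_succ_apply_le (k : ℕ) (i j : V) :
    (G.adjMatrix ℝ ^ (k + 1)) i j ≤ (Fintype.card V : ℝ) ^ k := by
  induction k generalizing i with
  | zero =>
    rw [zero_add, pow_one, pow_zero, G.adjMatrix_apply]
    split_ifs <;> norm_num
  | succ k ih =>
    rw [pow_succ', G.adjMatrix_mul_apply]
    calc ∑ m ∈ G.neighborFinset i, (G.adjMatrix ℝ ^ (k + 1)) m j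
        ≤ G.degree i * (Fintype.card V : ℝ) ^ k := by
          simpa using sum_le_card_nsmul (G.neighborFinset i) _ _ fun m _ ↦ ih m
      _ ≤ (Fintype.card V : ℝ) ^ (k + 1) := by
          rw [pow_succ']
          gcongr
          exact (G.degree_lt_card_verts i).le

end AdjMatrix

namespace LocallyDense

variable {V : Type*} [Fintype V] {G : SimpleGraph V} {ρ d : ℝ}

section AdjMatrix

variable [DecidableRel G.Adj]

theorem mul_sq_card_le_sum_adjMatrix (hG : LocallyDense G ρ d) {X : Finset V}
    (hX : ρ * Fintype.card V ≤ #X) : d * (#X : ℝ) ^ 2 ≤ ∑ x ∈ X, ∑ y ∈ X, G.adjMatrix ℝ x y := by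
  classical
  rw [sum_sum_adjMatrix_eq_two_mul_card_edges]
  linarith [hG X hX]

theorem mul_sq_card_sub_le_sum_adjMatrix (hG : LocallyDense G ρ d) (hd : d ≤ 1) (X : Finset V) :
    d * (#X : ℝ) ^ 2 - (ρ * Fintype.card V) ^ 2 ≤ ∑ x ∈ X, ∑ y ∈ X, G.adjMatrix ℝ x y := by
  obtain hX | hX := le_or_gt (ρ * Fintype.card V) #X
  · linarith [hG.mul_sq_card_le_sum_adjMatrix hX, sq_nonneg (ρ * Fintype.card V)]
  · have hedges : 0 ≤ ∑ x ∈ X, ∑ y ∈ X, G.adjMatrix ℝ x y := by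
      simp only [SimpleGraph.adjMatrix_apply]
      positivity
    have hsmall : (#X : ℝ) ^ 2 ≤ (ρ * Fintype.card V) ^ 2 := by gcongr
    linarith [mul_le_of_le_one_left (sq_nonneg (#X : ℝ)) hd]

theorem mul_sq_sum_sub_le_dotProduct (hG : LocallyDense G ρ d) (hd0 : 0 ≤ d) (hd1 : d ≤ 1)
    {f : V → ℝ} (hf : f ∈ Set.Icc 0 1) :
    d * (∑ x, f x) ^ 2 - (ρ * Fintype.card V) ^ 2 ≤ f ⬝ᵥ G.adjMatrix ℝ *ᵥ f := by
  classical
  set B : Matrix V V ℝ := G.adjMatrix ℝ - of fun _ _ ↦ d with hB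
  have hform (g : V → ℝ) : g ⬝ᵥ B *ᵥ g = g ⬝ᵥ G.adjMatrix ℝ *ᵥ g - d * (∑ x, g x) ^ 2 := by
    rw [hB, sub_mulVec, dotProduct_sub]
    simp only [dotProduct, mulVec, of_apply, ← mul_sum, ← sum_mul]
    ring
  suffices -(ρ * Fintype.card V) ^ 2 ≤ f ⬝ᵥ B *ᵥ f by linarith [hform f]
  refine le_of_separately_concaveOn_Icc (F := fun g ↦ g ⬝ᵥ B *ᵥ g) (fun g _ x ↦ ?_)
    (fun g hg ↦ ?_) hf
  · exact (concaveOn_dotProduct_mulVec_update (by simp [hB, hd0]) g).subset (Set.subset_univ _)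
      (convex_Icc _ _)
  · obtain ⟨X, rfl⟩ : ∃ X : Finset V, g = fun x ↦ if x ∈ X then 1 else 0 := by
      refine ⟨univ.filter (g · = 1), funext fun x ↦ ?_⟩
      rcases hg x with hx | hx <;> simp [hx]
    have hsum : ∑ x, (if x ∈ X then 1 else 0 : ℝ) = #X := by simp
    have hedges : (fun x ↦ if x ∈ X then 1 else 0) ⬝ᵥ
        G.adjMatrix ℝ *ᵥ (fun x ↦ if x ∈ X then 1 else 0) =
          ∑ x ∈ X, ∑ y ∈ X, G.adjMatrix ℝ x y := by
      simp [dotProduct, mulVec]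
    simp only [hform, hsum, hedges]
    linarith [hG.mul_sq_card_sub_le_sum_adjMatrix hd1 X]

theorem mul_sq_sum_sub_le_dotProduct_of_le (hG : LocallyDense G ρ d) (hd0 : 0 ≤ d) (hd1 : d ≤ 1)
    {c : ℝ} (hc : 0 < c) {f : V → ℝ} (hf0 : ∀ x, 0 ≤ f x) (hfc : ∀ x, f x ≤ c) :
    d * (∑ x, f x) ^ 2 - (ρ * Fintype.card V * c) ^ 2 ≤ f ⬝ᵥ G.adjMatrix ℝ *ᵥ f := by
  have hunit : c⁻¹ • f ∈ Set.Icc 0 1 :=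
    ⟨fun x ↦ mul_nonneg (inv_nonneg.2 hc.le) (hf0 x), fun x ↦ inv_mul_le_one_of_le₀ (hfc x) hc.le⟩
  have h := hG.mul_sq_sum_sub_le_dotProduct hd0 hd1 hunit
  simp only [Pi.smul_apply, smul_eq_mul, ← mul_sum, mulVec_smul, dotProduct_smul,
    smul_dotProduct] at h
  field_simp at h
  linarith

theorem mul_sub_le_trace_adjMatrix_pow [DecidableEq V] [Nonempty V] (hG : LocallyDense G ρ d)
    (hd0 : 0 ≤ d) (hd1 : d ≤ 1) {r : ℕ} (hr : 0 < r) :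
    d * (1 ⬝ᵥ G.adjMatrix ℝ ^ (2 * r) *ᵥ 1) - ρ ^ 2 * (Fintype.card V : ℝ) ^ (2 * r + 1) ≤
      (G.adjMatrix ℝ ^ (2 * r + 1)).trace := by
  obtain ⟨k, rfl⟩ := Nat.exists_eq_add_one.2 hr
  set A := G.adjMatrix ℝ
  set M := A ^ (k + 1) with hM
  have hMsymm : M.IsSymm := G.isSymm_adjMatrix.pow _
  have hsq : A ^ (2 * (k + 1)) = M * M := by rw [two_mul, pow_add]
  have hcycle : A ^ (2 * (k + 1) + 1) = M * A * M := by
    rw [hM, ← pow_succ, ← pow_add]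
    congr 1
    ring
  rw [hsq, hcycle, one_dotProduct_mul_self_mulVec_one hMsymm, trace_mul_mul_self hMsymm]
  calc d * ∑ i, (∑ j, M i j) ^ 2 - ρ ^ 2 * (Fintype.card V : ℝ) ^ (2 * (k + 1) + 1)
      = ∑ i, (d * (∑ j, M i j) ^ 2 - (ρ * Fintype.card V * (Fintype.card V : ℝ) ^ k) ^ 2) := by
        rw [sum_sub_distrib, mul_sum, sum_const, card_univ, nsmul_eq_mul]
        ring
    _ ≤ ∑ i, M i ⬝ᵥ A *ᵥ M i :=
        sum_le_sum fun i _ ↦ hG.mul_sq_sum_sub_le_dotProduct_of_le hd0 hd1 (by positivity)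
          (adjMatrix_pow_apply_nonneg G _ i) (adjMatrix_pow_succ_apply_le G k i)

end AdjMatrix

variable [Nonempty V]

theorem mul_homDensity_pathGraph_sub_le (hG : LocallyDense G ρ d) (hd0 : 0 ≤ d) (hd1 : d ≤ 1)
    {r : ℕ} (hr : 0 < r) :
    d * homDensity (SimpleGraph.pathGraph (2 * r + 1)) G - ρ ^ 2 ≤
      homDensity (SimpleGraph.cycleGraph (2 * r + 1)) G := by
  classical
  rw [homDensity_pathGraph, homDensity_cycleGraph G (by omega), le_div_iff₀ (by positivity),
    sub_mul, mul_assoc, div_mul_cancel₀ _ (by positivity)]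
  exact hG.mul_sub_le_trace_adjMatrix_pow hd0 hd1 hr

theorem le_homDensity_pathGraph_two (hG : LocallyDense G ρ d) (hρ : ρ ≤ 1) :
    d ≤ homDensity (SimpleGraph.pathGraph 2) G := by
  classical
  have h := hG.mul_sq_card_le_sum_adjMatrix (X := univ)
    (by simpa using mul_le_of_le_one_left (by positivity) hρ)
  rw [homDensity_pathGraph G 1, le_div_iff₀ (by positivity)]
  simpa [dotProduct, mulVec] using h

theorem pow_le_homDensity_pathGraph (hG : LocallyDense G ρ d) (hρ : ρ ≤ 1) (hd : 0 ≤ d) {m : ℕ}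
    (hm : Even m) (hm0 : 0 < m) : d ^ m ≤ homDensity (SimpleGraph.pathGraph (m + 1)) G :=
  calc d ^ m ≤ homDensity (SimpleGraph.pathGraph 2) G ^ m := by
        gcongr
        exact hG.le_homDensity_pathGraph_two hρ
    _ ≤ homDensity (SimpleGraph.pathGraph (m + 1)) G := by
        simpa using homDensity_pathGraph_rpow_le G one_pos hm0 hm

end LocallyDense

theorem stmt13_general {δ ρ d : ℝ} {ℓ r : ℕ} (hρ : ρ ≤ 1) (hρδ : ρ ^ 2 ≤ δ ^ (2 * r + 1))
    (hℓ : 0 < ℓ) (hℓr : ℓ ≤ 2 * r) (hd : d ≤ 1) {V : Type*} [Fintype V] [Nonempty V]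
    {G : SimpleGraph V} (hG : LocallyDense G ρ d) :
    (d - δ) * homDensity (SimpleGraph.pathGraph (ℓ + 1)) G ^ ((2 * r : ℝ) / ℓ) ≤
      homDensity (SimpleGraph.cycleGraph (2 * r + 1)) G := by
  have hpath := homDensity_nonneg (SimpleGraph.pathGraph (ℓ + 1)) G
  obtain hdδ | hδd := le_total d δ
  · exact (mul_nonpos_of_nonpos_of_nonneg (sub_nonpos.2 hdδ) (by positivity)).trans
      (homDensity_nonneg _ G)
  have hδ : 0 ≤ δ := (Odd.pow_nonneg_iff ⟨r, rfl⟩).1 ((sq_nonneg ρ).trans hρδ)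
  set t := homDensity (SimpleGraph.pathGraph (2 * r + 1)) G
  have hmean : homDensity (SimpleGraph.pathGraph (ℓ + 1)) G ^ ((2 * r : ℝ) / ℓ) ≤ t := by
    simpa using homDensity_pathGraph_rpow_le G hℓ hℓr (even_two_mul r)
  have herror : ρ ^ 2 ≤ δ * t :=
    calc ρ ^ 2 ≤ δ * δ ^ (2 * r) := hρδ.trans_eq (pow_succ' δ _)
      _ ≤ δ * d ^ (2 * r) := by gcongr
      _ ≤ δ * t := by
        gcongr
        exact hG.pow_le_homDensity_pathGraph hρ (hδ.trans hδd) (even_two_mul r) (by omega)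
  calc (d - δ) * homDensity (SimpleGraph.pathGraph (ℓ + 1)) G ^ ((2 * r : ℝ) / ℓ)
      ≤ (d - δ) * t := mul_le_mul_of_nonneg_left hmean (sub_nonneg.2 hδd)
    _ ≤ d * t - ρ ^ 2 := by linarith
    _ ≤ homDensity (SimpleGraph.cycleGraph (2 * r + 1)) G :=
        hG.mul_homDensity_pathGraph_sub_le (hδ.trans hδd) hd (by omega)

theorem stmt13 (δ : ℝ) (hδ : 0 < δ) (ℓ r : ℕ) (hℓ : 0 < ℓ) (hr : 0 < r)
    (hℓr : ℓ ≤ 2 * r) :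
    ∃ (ρ : ℝ) (n₀ : ℕ), 0 < ρ ∧
      ∀ (d : ℝ), 0 < d → d ≤ 1 →
        ∀ (β : Type) [Fintype β] (G : SimpleGraph β),
          n₀ ≤ Fintype.card β → LocallyDense G ρ d →
            homDensity (SimpleGraph.cycleGraph (2 * r + 1)) G
              ≥ (d - δ) *
                homDensity (SimpleGraph.pathGraph (ℓ + 1)) G ^ ((2 * r : ℝ) / (ℓ : ℝ)) := by
  refine ⟨min 1 √(δ ^ (2 * r + 1)), 1, by positivity, fun d _ hd β _ G hn hG ↦ ?_⟩
  have : Nonempty β := Fintype.card_pos_iff.1 hn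
  exact stmt13_general (min_le_left _ _)
    ((Real.le_sqrt' (by positivity)).1 (min_le_right _ _)) hℓ hℓr hd hG
end

section
/- For every finite simple graph G and all positive integers ℓ and r with ℓ < 2r, t_{P_ℓ}(G) ≤ t_{P_{2r}}(G)^{ℓ/(2r)}. -/
open MeasureTheory

/-!
If `A` is the adjacency matrix of `G`, the number of homomorphisms `P_k → G` is `1ᵀ A ^ k 1`. By the
spectral theorem this is the `k`-th moment `∑ i, c i ^ 2 * λ i ^ k` of a positive measure of total
mass `|V(G)|` on the spectrum of `A`. Hölder's inequality bounds its `ℓ`-th absolute moment by its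
`2r`-th one, where the absolute value may be dropped because `2r` is even.
-/

open Matrix SimpleGraph

theorem sum_mul_rpow_le_rpow_mul_rpow {ι : Type*} (s : Finset ι) {p q : ℝ} (hp : 0 < p)
    (hpq : p ≤ q) {w f : ι → ℝ} (hw : ∀ i, 0 ≤ w i) (hf : ∀ i, 0 ≤ f i) :
    ∑ i ∈ s, w i * f i ^ p ≤
      (∑ i ∈ s, w i) ^ (1 - p / q) * (∑ i ∈ s, w i * f i ^ q) ^ (p / q) := by
  have holder := Real.inner_le_weight_mul_Lp_of_nonneg s ((one_le_div hp).2 hpq) w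
    (fun i ↦ f i ^ p) hw fun i ↦ Real.rpow_nonneg (hf i) p
  simpa only [← Real.rpow_mul (hf _), mul_div_cancel₀ q hp.ne', inv_div] using holder

section Hermitian

variable {𝕜 n : Type*} [RCLike 𝕜] [Fintype n] [DecidableEq n] {A : Matrix n n 𝕜}

theorem star_dotProduct_pow_mulVec_eq_sum_eigenvalues (hA : A.IsHermitian) (v : n → 𝕜) (k : ℕ) :
    star v ⬝ᵥ (A ^ k *ᵥ v) =
      ((∑ i, ‖(star (hA.eigenvectorUnitary : Matrix n n 𝕜) *ᵥ v) i‖ ^ 2 *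
        hA.eigenvalues i ^ k : ℝ) : 𝕜) := by
  set U : Matrix n n 𝕜 := (hA.eigenvectorUnitary : Matrix n n 𝕜)
  have pow_eq : A ^ k = U * diagonal (fun i ↦ (hA.eigenvalues i : 𝕜) ^ k) * star U := by
    conv_lhs => rw [hA.spectral_theorem]
    rw [← map_pow, Unitary.conjStarAlgAut_apply, diagonal_pow]
    rfl
  have star_vecMul : star v ᵥ* U = star (star U *ᵥ v) := by
    rw [star_mulVec, star_eq_conjTranspose, conjTranspose_conjTranspose]
  rw [pow_eq, ← mulVec_mulVec, ← mulVec_mulVec, dotProduct_mulVec, star_vecMul]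
  simp only [dotProduct, mulVec_diagonal, Pi.star_apply, RCLike.star_def]
  push_cast
  refine Finset.sum_congr rfl fun i _ ↦ ?_
  rw [← RCLike.conj_mul]
  ring

theorem norm_star_dotProduct_pow_mulVec_le (hA : A.IsHermitian) (v : n → 𝕜) {k m : ℕ}
    (hk : 0 < k) (hkm : k ≤ m) (hm : Even m) :
    ‖star v ⬝ᵥ (A ^ k *ᵥ v)‖ ≤
      ‖star v ⬝ᵥ v‖ ^ (1 - k / m : ℝ) * ‖star v ⬝ᵥ (A ^ m *ᵥ v)‖ ^ (k / m : ℝ) := by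
  obtain ⟨w, x, hw, moment⟩ : ∃ w x : n → ℝ, (∀ i, 0 ≤ w i) ∧
      ∀ j, ‖star v ⬝ᵥ (A ^ j *ᵥ v)‖ = |∑ i, w i * x i ^ j| :=
    ⟨_, hA.eigenvalues, fun _ ↦ sq_nonneg _, fun j ↦ by
      rw [star_dotProduct_pow_mulVec_eq_sum_eigenvalues hA, RCLike.norm_ofReal]⟩
  have mass : ‖star v ⬝ᵥ v‖ = ∑ i, w i := by
    simpa [abs_of_nonneg (Finset.sum_nonneg fun i _ ↦ hw i)] using moment 0
  have even_moment : ‖star v ⬝ᵥ (A ^ m *ᵥ v)‖ = ∑ i, w i * |x i| ^ m := by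
    simp only [moment, hm.pow_abs]
    exact abs_of_nonneg (Finset.sum_nonneg fun i _ ↦ mul_nonneg (hw i) (hm.pow_nonneg _))
  calc ‖star v ⬝ᵥ (A ^ k *ᵥ v)‖
      ≤ ∑ i, w i * |x i| ^ k := by
        rw [moment]
        refine (Finset.abs_sum_le_sum_abs _ _).trans_eq ?_
        simp only [abs_mul, abs_pow, abs_of_nonneg (hw _)]
    _ ≤ (∑ i, w i) ^ (1 - k / m : ℝ) * (∑ i, w i * |x i| ^ m) ^ (k / m : ℝ) := by
        simpa only [Real.rpow_natCast] using sum_mul_rpow_le_rpow_mul_rpow Finset.univ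
          (Nat.cast_pos.2 hk) (Nat.cast_le.2 hkm) hw fun i ↦ abs_nonneg (x i)
    _ = _ := by rw [mass, even_moment]

end Hermitian

theorem sum_mul_prod_mul_eq_dotProduct_pow_mulVec {R n : Type*} [CommSemiring R] [Fintype n]
    [DecidableEq n] (A : Matrix n n R) (u v : n → R) (k : ℕ) :
    ∑ φ : Fin (k + 1) → n,
        u (φ 0) * (∏ i : Fin k, A (φ i.castSucc) (φ i.succ)) * v (φ (Fin.last k)) =
      u ⬝ᵥ (A ^ k *ᵥ v) := by
  induction k generalizing u with
  | zero =>
    rw [← (Equiv.funUnique (Fin 1) n).symm.sum_comp]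
    simp [dotProduct]
  | succ k ih =>
    rw [← (Fin.consEquiv fun _ : Fin (k + 2) ↦ n).sum_comp, Fintype.sum_prod_type_right,
      pow_succ', ← mulVec_mulVec, dotProduct_mulVec, ← ih]
    refine Finset.sum_congr rfl fun φ _ ↦ ?_
    simp only [vecMul, dotProduct, Finset.sum_mul]
    refine Finset.sum_congr rfl fun a _ ↦ ?_
    rw [Fin.prod_univ_succ, ← mul_assoc]
    simp [Fin.consEquiv, ← Fin.succ_last]

section Graph

variable {V : Type*} (G : SimpleGraph V)

theorem pathGraph_adj_iff_exists_castSucc_succ {k : ℕ} {a b : Fin (k + 1)} :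
    (pathGraph (k + 1)).Adj a b ↔
      ∃ i : Fin k, a = i.castSucc ∧ b = i.succ ∨ a = i.succ ∧ b = i.castSucc := by
  simp only [pathGraph_adj, Fin.ext_iff, Fin.val_castSucc, Fin.val_succ]
  constructor
  · rintro (h | h)
    · exact ⟨⟨a, by lia⟩, .inl ⟨rfl, h.symm⟩⟩
    · exact ⟨⟨b, by lia⟩, .inr ⟨h.symm, rfl⟩⟩
  · rintro ⟨i, h | h⟩ <;> lia

/-- Homomorphisms from the path with `k` edges to `G`, as sequences of `k + 1` vertices of `G` in
which consecutive vertices are adjacent. -/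
def pathGraphHomEquiv (k : ℕ) :
    (pathGraph (k + 1) →g G) ≃
      {φ : Fin (k + 1) → V // ∀ i : Fin k, G.Adj (φ i.castSucc) (φ i.succ)} where
  toFun f := ⟨f, fun i ↦ f.map_adj (pathGraph_adj_iff_exists_castSucc_succ.2 ⟨i, .inl ⟨rfl, rfl⟩⟩)⟩
  invFun φ := ⟨φ.1, fun h ↦ by
    obtain ⟨i, ⟨rfl, rfl⟩ | ⟨rfl, rfl⟩⟩ := pathGraph_adj_iff_exists_castSucc_succ.1 h
    exacts [φ.2 i, (φ.2 i).symm]⟩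

theorem natCast_card_pathGraph_hom [Fintype V] [DecidableEq V] [DecidableRel G.Adj] (R : Type*)
    [CommSemiring R] (k : ℕ) :
    (Nat.card (pathGraph (k + 1) →g G) : R) = 1 ⬝ᵥ (G.adjMatrix R ^ k *ᵥ 1) := by
  rw [Nat.card_congr (pathGraphHomEquiv G k), Nat.card_eq_fintype_card, Fintype.card_subtype,
    Finset.natCast_card_filter, ← sum_mul_prod_mul_eq_dotProduct_pow_mulVec]
  simp only [Pi.one_apply, one_mul, mul_one, adjMatrix_apply, Fintype.prod_ite_zero,
    Finset.prod_const_one]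

theorem card_pathGraph_hom_le [Fintype V] {k m : ℕ} (hk : 0 < k) (hkm : k ≤ m) (hm : Even m) :
    (Nat.card (pathGraph (k + 1) →g G) : ℝ) ≤
      (Fintype.card V : ℝ) ^ (1 - k / m : ℝ) *
        (Nat.card (pathGraph (m + 1) →g G) : ℝ) ^ (k / m : ℝ) := by
  classical
  have hA : (G.adjMatrix ℝ).IsHermitian := by
    rw [IsHermitian, conjTranspose_eq_transpose_of_trivial, transpose_adjMatrix]
  simpa [← natCast_card_pathGraph_hom] using norm_star_dotProduct_pow_mulVec_le hA 1 hk hkm hm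

end Graph

theorem stmt14 {β : Type*} [Fintype β] (G : SimpleGraph β) (ℓ r : ℕ)
    (hℓ : 0 < ℓ) (hr : 0 < r) (hℓr : ℓ < 2 * r) :
    homDensity (SimpleGraph.pathGraph (ℓ + 1)) G ≤
      homDensity (SimpleGraph.pathGraph (2 * r + 1)) G ^ ((ℓ : ℝ) / (2 * r : ℝ)) := by
  obtain _ | _ := isEmpty_or_nonempty β
  · simp [homDensity, hℓ.ne', hr.ne']
  have hcount := card_pathGraph_hom_le G hℓ hℓr.le (even_two_mul r)
  push_cast at hcount
  simp only [homDensity, Fintype.card_fin]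
  set N : ℝ := (Fintype.card β : ℝ)
  set θ : ℝ := ℓ / (2 * r) with hθ
  have hN : 0 < N := Nat.cast_pos.2 Fintype.card_pos
  have hexp : ((2 * r + 1 : ℕ) : ℝ) * θ + (1 - θ) = (ℓ + 1 : ℕ) := by
    push_cast [hθ]
    field_simp
    ring
  have hpow : N ^ (ℓ + 1) = (N ^ (2 * r + 1)) ^ θ * N ^ (1 - θ) := by
    rw [← Real.rpow_natCast, ← Real.rpow_natCast, ← Real.rpow_mul hN.le, ← Real.rpow_add hN, hexp]
  calc (Nat.card (pathGraph (ℓ + 1) →g G) : ℝ) / N ^ (ℓ + 1)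
      ≤ N ^ (1 - θ) * Nat.card (pathGraph (2 * r + 1) →g G) ^ θ / N ^ (ℓ + 1) := by gcongr
    _ = Nat.card (pathGraph (2 * r + 1) →g G) ^ θ / (N ^ (2 * r + 1)) ^ θ := by
      rw [hpow, mul_comm, mul_div_mul_right _ _ (Real.rpow_pos_of_pos hN _).ne']
    _ = _ := (Real.div_rpow (by positivity) (by positivity) θ).symm
end
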